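/- arXiv:2306.16881 — 2 statements merged into one kernel-verified Lean document; each statement's English description precedes it below -/
import Mathlib

section
/- Let A ⊆ Ag, let x be one of the frame conditions D, T, B, 4, 5, and let L1, L2 be logics without recursion operators such that L1(α) = L2(α) + x for α ∈ A and L1(α) = L2(α) otherwise, where each L2(α) only includes frame conditions strictly preceding x in the fixed order D, T, B, 4, 5. Let d = md(φ) if x ∉ {4,5} and d = md(φ)·|φ| if x ∈ {4,5}. Then a recursion-free formula φ is L1-satisfiable if and only if the formula φ ∧ Inv_d(⋀_{ψ ∈ s̄ub(φ), α ∈ A} ax^x_α[ψ/p]) is L2-satisfiable. -/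
/-- Recursion-free multi-agent modal formulas. -/
inductive MFormula (Ag PVar : Type) : Type
  | prop  : PVar → MFormula Ag PVar
  | nprop : PVar → MFormula Ag PVar
  | tt    : MFormula Ag PVar
  | ff    : MFormula Ag PVar
  | and   : MFormula Ag PVar → MFormula Ag PVar → MFormula Ag PVar
  | or    : MFormula Ag PVar → MFormula Ag PVar → MFormula Ag PVar
  | dia   : Ag → MFormula Ag PVar → MFormula Ag PVar
  | box   : Ag → MFormula Ag PVar → MFormula Ag PVar
  deriving DecidableEq

/-- A Kripke model. -/
structure KModel (Ag PVar : Type) where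
  W : Type
  h_ne : Nonempty W
  R : Ag → W → W → Prop
  V : W → Set PVar

variable {Ag PVar : Type}

/-- Standard modal semantics. -/
def MFormula.sem (M : KModel Ag PVar) : MFormula Ag PVar → Set M.W
  | .prop p => {s | p ∈ M.V s}
  | .nprop p => {s | p ∉ M.V s}
  | .tt => Set.univ
  | .ff => ∅
  | .and φ ψ => MFormula.sem M φ ∩ MFormula.sem M ψ
  | .or φ ψ => MFormula.sem M φ ∪ MFormula.sem M ψ
  | .box a φ => {s | ∀ t, M.R a s t → t ∈ MFormula.sem M φ}
  | .dia a φ => {s | ∃ t, M.R a s t ∧ t ∈ MFormula.sem M φ}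

inductive FrameCond : Type
  | D | T | B | four | five
  deriving DecidableEq

def SatisfiesCond {W : Type} (R : W → W → Prop) : FrameCond → Prop
  | .D => ∀ s, ∃ t, R s t
  | .T => ∀ s, R s s
  | .B => ∀ s t, R s t → R t s
  | .four => ∀ s t u, R s t → R t u → R s u
  | .five => ∀ s t u, R s t → R s u → R t u

def IsLModel (L : Ag → Set FrameCond) (M : KModel Ag PVar) : Prop :=
  ∀ a : Ag, ∀ c ∈ L a, SatisfiesCond (M.R a) c

def MSatisfiable (L : Ag → Set FrameCond) (φ : MFormula Ag PVar) : Prop :=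
  ∃ (M : KModel Ag PVar), IsLModel L M ∧ ∃ w : M.W, w ∈ MFormula.sem M φ

/-- Modal depth. -/
def MFormula.md : MFormula Ag PVar → ℕ
  | .and φ ψ => max (MFormula.md φ) (MFormula.md ψ)
  | .or φ ψ => max (MFormula.md φ) (MFormula.md ψ)
  | .dia _ φ => MFormula.md φ + 1
  | .box _ φ => MFormula.md φ + 1
  | _ => 0

/-- Syntactic negation (usual dualities). -/
def MFormula.neg : MFormula Ag PVar → MFormula Ag PVar
  | .prop p => .nprop p
  | .nprop p => .prop p
  | .tt => .ff
  | .ff => .tt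
  | .and φ ψ => .or (MFormula.neg φ) (MFormula.neg ψ)
  | .or φ ψ => .and (MFormula.neg φ) (MFormula.neg ψ)
  | .dia a φ => .box a (MFormula.neg φ)
  | .box a φ => .dia a (MFormula.neg φ)

/-- Implication φ → ψ as ¬φ ∨ ψ. -/
def MFormula.impl (φ ψ : MFormula Ag PVar) : MFormula Ag PVar := .or φ.neg ψ

/-- The list of subformulas. -/
def MFormula.subList : MFormula Ag PVar → List (MFormula Ag PVar)
  | .and φ ψ => .and φ ψ :: (MFormula.subList φ ++ MFormula.subList ψ)
  | .or φ ψ => .or φ ψ :: (MFormula.subList φ ++ MFormula.subList ψ)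
  | .dia a φ => .dia a φ :: MFormula.subList φ
  | .box a φ => .box a φ :: MFormula.subList φ
  | φ => [φ]

variable [DecidableEq Ag] [DecidableEq PVar]

/-- The set of subformulas sub(φ). -/
def msub (φ : MFormula Ag PVar) : Finset (MFormula Ag PVar) := φ.subList.toFinset

/-- |φ| is the number of distinct subformulas. -/
def msize (φ : MFormula Ag PVar) : ℕ := (msub φ).card

/-- s̄ub(φ) = sub(φ) ∪ {¬ψ | ψ ∈ sub(φ)}. -/
def msbar (φ : MFormula Ag PVar) : Finset (MFormula Ag PVar) :=
  msub φ ∪ (msub φ).image MFormula.neg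

/-- The instance ax^x_α[ψ/p] of the axiom for frame condition x. -/
def axInst (x : FrameCond) (a : Ag) (ψ : MFormula Ag PVar) : MFormula Ag PVar :=
  match x with
  | .D => .dia a .tt
  | .T => MFormula.impl (.box a ψ) ψ
  | .B => MFormula.impl (.dia a (.box a ψ)) ψ
  | .four => MFormula.impl (.box a ψ) (.box a (.box a ψ))
  | .five => MFormula.impl (.dia a (.box a ψ)) (.box a ψ)

/-- Finite conjunction. -/
def bigAndM : List (MFormula Ag PVar) → MFormula Ag PVar
  | [] => .tt
  | φ :: l => .and φ (bigAndM l)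

/-- [Ag]φ = ⋀_{α ∈ Ag} [α]φ. -/
noncomputable def boxAg [Fintype Ag] (φ : MFormula Ag PVar) : MFormula Ag PVar :=
  bigAndM ((Finset.univ : Finset Ag).toList.map (fun a => MFormula.box a φ))

/-- [Ag]^i φ. -/
noncomputable def boxAgIter [Fintype Ag] : ℕ → MFormula Ag PVar → MFormula Ag PVar
  | 0, φ => φ
  | n + 1, φ => boxAg (boxAgIter n φ)

/-- Inv_d(φ) = ⋀_{i ≤ d} [Ag]^i φ. -/
noncomputable def invd [Fintype Ag] (d : ℕ) (φ : MFormula Ag PVar) : MFormula Ag PVar :=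
  bigAndM ((List.range (d + 1)).map (fun i => boxAgIter i φ))

/-- The one-step translation: φ ∧ Inv_d(⋀_{ψ ∈ s̄ub(φ), α ∈ A} ax^x_α[ψ/p]). -/
noncomputable def translX [Fintype Ag] (A : Finset Ag) (x : FrameCond) (φ : MFormula Ag PVar) :
    MFormula Ag PVar :=
  let d : ℕ := if x = FrameCond.four ∨ x = FrameCond.five then φ.md * msize φ else φ.md
  .and φ (invd d (bigAndM ((msbar φ).toList.map
    (fun ψ => bigAndM (A.toList.map (fun a => axInst x a ψ))))))

/-- Position of a frame condition in the fixed order D, T, B, 4, 5. -/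
def condIdx : FrameCond → ℕ
  | .D => 0
  | .T => 1
  | .B => 2
  | .four => 3
  | .five => 4

set_option linter.unusedSectionVars false

section Subformulas

theorem MFormula.neg_neg (ψ : MFormula Ag PVar) : ψ.neg.neg = ψ := by
  induction ψ <;> simp_all [MFormula.neg]

theorem MFormula.mem_sem_neg (M : KModel Ag PVar) (ψ : MFormula Ag PVar) (s : M.W) :
    s ∈ MFormula.sem M ψ.neg ↔ s ∉ MFormula.sem M ψ := by
  induction ψ generalizing s <;> simp_all [MFormula.neg, MFormula.sem, imp_iff_not_or]

theorem MFormula.mem_sem_impl (M : KModel Ag PVar) (ψ χ : MFormula Ag PVar) (s : M.W) :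
    s ∈ MFormula.sem M (ψ.impl χ) ↔ (s ∈ MFormula.sem M ψ → s ∈ MFormula.sem M χ) := by
  have h : s ∈ MFormula.sem M (ψ.impl χ) ↔
      s ∈ MFormula.sem M ψ.neg ∨ s ∈ MFormula.sem M χ := Iff.rfl
  rw [h, MFormula.mem_sem_neg]
  tauto

theorem MFormula.mem_subList_self (ψ : MFormula Ag PVar) : ψ ∈ ψ.subList := by
  cases ψ <;> simp [MFormula.subList]

theorem MFormula.subList_trans {φ ψ χ : MFormula Ag PVar} (hψ : ψ ∈ φ.subList)
    (hχ : χ ∈ ψ.subList) : χ ∈ φ.subList := by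
  induction φ with
  | prop | nprop | tt | ff => simp_all [MFormula.subList]
  | and φ₁ φ₂ ih₁ ih₂ | or φ₁ φ₂ ih₁ ih₂ =>
    simp only [MFormula.subList, List.mem_cons, List.mem_append] at hψ ⊢
    rcases hψ with rfl | h | h
    · simpa [MFormula.subList] using hχ
    · exact .inr (.inl (ih₁ h))
    · exact .inr (.inr (ih₂ h))
  | dia a φ ih | box a φ ih =>
    simp only [MFormula.subList, List.mem_cons] at hψ ⊢
    rcases hψ with rfl | h
    · simpa [MFormula.subList] using hχ
    · exact .inr (ih h)

theorem MFormula.exists_mem_subList_md_eq_zero (φ : MFormula Ag PVar) :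
    ∃ ψ ∈ φ.subList, ψ.md = 0 := by
  induction φ with
  | prop | nprop | tt | ff => simp [MFormula.subList, MFormula.md]
  | and _ _ ih _ | or _ _ ih _ | dia _ _ ih | box _ _ ih =>
    obtain ⟨ψ, h, h0⟩ := ih
    exact ⟨ψ, by simp [MFormula.subList, h], h0⟩

end Subformulas

theorem mem_msub_self (φ : MFormula Ag PVar) : φ ∈ msub φ := by
  simp [msub, MFormula.mem_subList_self]

theorem msub_trans {φ ψ χ : MFormula Ag PVar} (hψ : ψ ∈ msub φ) (hχ : χ ∈ ψ.subList) :
    χ ∈ msub φ := by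
  simp only [msub, List.mem_toFinset] at hψ ⊢
  exact MFormula.subList_trans hψ hχ

theorem exists_mem_msub_md_eq_zero (φ : MFormula Ag PVar) : ∃ ψ ∈ msub φ, ψ.md = 0 := by
  simpa [msub] using φ.exists_mem_subList_md_eq_zero

theorem msize_pos (φ : MFormula Ag PVar) : 1 ≤ msize φ :=
  Finset.card_pos.mpr ⟨φ, mem_msub_self φ⟩

theorem two_le_msize {φ : MFormula Ag PVar} (h : 1 ≤ φ.md) : 2 ≤ msize φ := by
  obtain ⟨ψ, hψ, h0⟩ := exists_mem_msub_md_eq_zero φ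
  refine Finset.one_lt_card.mpr ⟨φ, mem_msub_self φ, ψ, hψ, ?_⟩
  rintro rfl
  omega

theorem msub_subset_msbar {φ ψ : MFormula Ag PVar} (h : ψ ∈ msub φ) : ψ ∈ msbar φ :=
  Finset.mem_union_left _ h

theorem neg_mem_msbar {φ ψ : MFormula Ag PVar} (h : ψ ∈ msbar φ) : ψ.neg ∈ msbar φ := by
  simp only [msbar, Finset.mem_union, Finset.mem_image] at h ⊢
  rcases h with h | ⟨χ, h, rfl⟩
  · exact .inr ⟨ψ, h, rfl⟩
  · exact .inl (by rwa [MFormula.neg_neg])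

/-- The formulas `χ` of `s̄ub(φ)` whose box `[a]χ` is also in `s̄ub(φ)`. -/
def boxedBy (φ : MFormula Ag PVar) (a : Ag) : Finset (MFormula Ag PVar) :=
  (msbar φ).filter fun χ => MFormula.box a χ ∈ msbar φ

theorem mem_boxedBy_of_box {φ χ : MFormula Ag PVar} {a : Ag} (h : .box a χ ∈ msub φ) :
    χ ∈ boxedBy φ a :=
  Finset.mem_filter.mpr ⟨msub_subset_msbar (msub_trans h
    (by simp [MFormula.subList, MFormula.mem_subList_self])), msub_subset_msbar h⟩

theorem neg_mem_boxedBy_of_dia {φ χ : MFormula Ag PVar} {a : Ag} (h : .dia a χ ∈ msub φ) :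
    χ.neg ∈ boxedBy φ a :=
  Finset.mem_filter.mpr ⟨neg_mem_msbar (msub_subset_msbar (msub_trans h
    (by simp [MFormula.subList, MFormula.mem_subList_self]))),
    neg_mem_msbar (msub_subset_msbar h)⟩

/-- The formula that a modal formula, or its dual, requires of all successors. -/
def MFormula.boxBody : MFormula Ag PVar → MFormula Ag PVar
  | .box _ χ => χ
  | .dia _ χ => χ.neg
  | ψ => ψ

theorem card_boxedBy_lt (φ : MFormula Ag PVar) (a : Ag) : (boxedBy φ a).card < msize φ := by
  have hsub : boxedBy φ a ⊆ ((msub φ).filter fun ψ => ψ.md ≠ 0).image MFormula.boxBody := by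
    intro χ hχ
    have h := (Finset.mem_filter.mp hχ).2
    simp only [msbar, Finset.mem_union, Finset.mem_image] at h
    simp only [Finset.mem_image, Finset.mem_filter]
    rcases h with h | ⟨ψ, h, he⟩
    · exact ⟨_, ⟨h, by simp [MFormula.md]⟩, rfl⟩
    · refine ⟨ψ, ⟨h, ?_⟩, ?_⟩ <;> cases ψ <;>
        simp_all [MFormula.neg, MFormula.md, MFormula.boxBody]
  obtain ⟨ψ, hψ, h0⟩ := exists_mem_msub_md_eq_zero φ
  calc (boxedBy φ a).card ≤ _ := Finset.card_le_card hsub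
    _ ≤ _ := Finset.card_image_le
    _ < msize φ := Finset.card_lt_card (Finset.filter_ssubset.mpr ⟨ψ, hψ, by simp [h0]⟩)

theorem mem_sem_bigAndM (M : KModel Ag PVar) (l : List (MFormula Ag PVar)) (s : M.W) :
    s ∈ MFormula.sem M (bigAndM l) ↔ ∀ ψ ∈ l, s ∈ MFormula.sem M ψ := by
  induction l with
  | nil => simp [bigAndM, MFormula.sem]
  | cons ψ l ih => simp [bigAndM, MFormula.sem, ih]

theorem mem_sem_boxAg [Fintype Ag] (M : KModel Ag PVar) (ψ : MFormula Ag PVar) (s : M.W) :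
    s ∈ MFormula.sem M (boxAg ψ) ↔ ∀ a t, M.R a s t → t ∈ MFormula.sem M ψ := by
  simp [boxAg, mem_sem_bigAndM, MFormula.sem]

section Reachability

/-- `t` is reachable from `w` in exactly `n` steps of arbitrary agents. -/
def ReachIn (M : KModel Ag PVar) (w : M.W) : ℕ → M.W → Prop
  | 0, t => t = w
  | n + 1, t => ∃ s a, ReachIn M w n s ∧ M.R a s t

/-- `t` is reachable from `w` in at most `n` steps. -/
def Within (M : KModel Ag PVar) (w : M.W) (n : ℕ) (t : M.W) : Prop :=
  ∃ i ≤ n, ReachIn M w i t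

variable {M : KModel Ag PVar} {w s t : M.W} {n k : ℕ}

theorem Within.mono (h : Within M w n s) (hn : n ≤ k) : Within M w k s :=
  let ⟨i, hi, hr⟩ := h
  ⟨i, hi.trans hn, hr⟩

theorem Within.step {a : Ag} (h : Within M w n s) (hst : M.R a s t) : Within M w (n + 1) t :=
  let ⟨i, hi, hr⟩ := h
  ⟨i + 1, by omega, s, a, hr, hst⟩

end Reachability

theorem mem_sem_of_boxAgIter [Fintype Ag] {M : KModel Ag PVar} {w : M.W} {ψ : MFormula Ag PVar}
    {n k : ℕ} (h : w ∈ MFormula.sem M (boxAgIter (n + k) ψ)) {s : M.W} (hs : ReachIn M w n s) :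
    s ∈ MFormula.sem M (boxAgIter k ψ) := by
  induction n generalizing k s with
  | zero => rw [ReachIn] at hs; subst hs; simpa using h
  | succ n ih =>
    obtain ⟨u, a, hu, hus⟩ := hs
    have := ih (k := k + 1) (by rwa [show n + (k + 1) = n + 1 + k by omega]) hu
    exact (mem_sem_boxAg M _ u).mp this a s hus

theorem mem_sem_of_invd [Fintype Ag] {M : KModel Ag PVar} {w s : M.W} {ψ : MFormula Ag PVar}
    {d : ℕ} (h : w ∈ MFormula.sem M (invd d ψ)) (hs : Within M w d s) :
    s ∈ MFormula.sem M ψ := by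
  obtain ⟨n, hn, hr⟩ := hs
  have := (mem_sem_bigAndM M _ w).mp h (boxAgIter n ψ)
    (List.mem_map.mpr ⟨n, List.mem_range.mpr (by omega), rfl⟩)
  exact mem_sem_of_boxAgIter (k := 0) this hr

theorem mem_sem_invd_of_valid [Fintype Ag] {M : KModel Ag PVar} {ψ : MFormula Ag PVar}
    (h : ∀ s, s ∈ MFormula.sem M ψ) (d : ℕ) (s : M.W) : s ∈ MFormula.sem M (invd d ψ) := by
  have key : ∀ n s, s ∈ MFormula.sem M (boxAgIter n ψ) := by
    intro n
    induction n with
    | zero => exact h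
    | succ n ih => exact fun s => (mem_sem_boxAg M _ s).mpr fun a t _ => ih t
  rw [invd, mem_sem_bigAndM]
  intro χ hχ
  obtain ⟨n, -, rfl⟩ := List.mem_map.mp hχ
  exact key n s

theorem mem_sem_axInst {M : KModel Ag PVar} {x : FrameCond} {a : Ag}
    (h : SatisfiesCond (M.R a) x) (ψ : MFormula Ag PVar) (s : M.W) :
    s ∈ MFormula.sem M (axInst x a ψ) := by
  cases x <;> simp only [axInst, MFormula.mem_sem_impl] <;>
    simp only [MFormula.sem, Set.mem_ofPred_eq, Set.mem_univ, and_true]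
  · exact h s
  · exact fun hs => hs s (h s)
  · rintro ⟨t, hst, ht⟩
    exact ht s (h s t hst)
  · exact fun hs t hst u htu => hs u (h s t u hst htu)
  · rintro ⟨t, hst, ht⟩ u hsu
    exact ht u (h s t u hst hsu)

/-- Truth is preserved from `M` to `M'` along a map that respects boxes and diamonds up to the
modal depth allowed at each state of `M'`. -/
theorem mem_sem_of_level {M M' : KModel Ag PVar} {φ : MFormula Ag PVar}
    (f : M'.W → M.W) (lev : M'.W → ℕ) (hV : ∀ p, M'.V p = M.V (f p))
    (hbox : ∀ a p q χ, .box a χ ∈ msub φ → M'.R a p q → χ.md < lev p →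
      f p ∈ MFormula.sem M (.box a χ) → f q ∈ MFormula.sem M χ ∧ χ.md ≤ lev q)
    (hdia : ∀ a p χ, .dia a χ ∈ msub φ → χ.md < lev p → f p ∈ MFormula.sem M (.dia a χ) →
      ∃ q, M'.R a p q ∧ f q ∈ MFormula.sem M χ ∧ χ.md ≤ lev q)
    {ψ : MFormula Ag PVar} (hψ : ψ ∈ msub φ) {p : M'.W} (hp : ψ.md ≤ lev p)
    (h : f p ∈ MFormula.sem M ψ) : p ∈ MFormula.sem M' ψ := by
  induction ψ generalizing p with
  | prop | nprop => simpa [MFormula.sem, hV] using h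
  | tt => trivial
  | ff => exact h.elim
  | and ψ₁ ψ₂ ih₁ ih₂ =>
    have h₁ : ψ₁ ∈ msub φ := msub_trans hψ (by simp [MFormula.subList, MFormula.mem_subList_self])
    have h₂ : ψ₂ ∈ msub φ := msub_trans hψ (by simp [MFormula.subList, MFormula.mem_subList_self])
    exact ⟨ih₁ h₁ ((le_max_left _ _).trans hp) h.1, ih₂ h₂ ((le_max_right _ _).trans hp) h.2⟩
  | or ψ₁ ψ₂ ih₁ ih₂ =>
    have h₁ : ψ₁ ∈ msub φ := msub_trans hψ (by simp [MFormula.subList, MFormula.mem_subList_self])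
    have h₂ : ψ₂ ∈ msub φ := msub_trans hψ (by simp [MFormula.subList, MFormula.mem_subList_self])
    exact h.imp (ih₁ h₁ ((le_max_left _ _).trans hp)) (ih₂ h₂ ((le_max_right _ _).trans hp))
  | dia a χ ih =>
    obtain ⟨q, hpq, hq, hlev⟩ := hdia a p χ hψ hp h
    exact ⟨q, hpq, ih (msub_trans hψ
      (by simp [MFormula.subList, MFormula.mem_subList_self])) hlev hq⟩
  | box a χ ih =>
    intro q hpq
    obtain ⟨hq, hlev⟩ := hbox a p q χ hψ hpq hp h
    exact ih (msub_trans hψ (by simp [MFormula.subList, MFormula.mem_subList_self])) hlev hq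

section BoxTypes

variable (φ : MFormula Ag PVar) (M : KModel Ag PVar) (a : Ag)

open Classical in
/-- The formulas of `boxedBy φ a` whose `a`-box holds at `s`. -/
noncomputable def trueBoxes (s : M.W) : Finset (MFormula Ag PVar) :=
  (boxedBy φ a).filter fun χ => s ∈ MFormula.sem M (.box a χ)

/-- `t` satisfies everything that the true `a`-boxes of `s` require of successors. -/
def Sees (s t : M.W) : Prop := ∀ χ ∈ trueBoxes φ M a s, t ∈ MFormula.sem M χ

variable {φ M a} {s t u : M.W}

theorem mem_trueBoxes {χ : MFormula Ag PVar} :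
    χ ∈ trueBoxes φ M a s ↔ χ ∈ boxedBy φ a ∧ s ∈ MFormula.sem M (.box a χ) := by
  simp [trueBoxes]

theorem card_trueBoxes_lt : (trueBoxes φ M a s).card < msize φ :=
  (Finset.card_le_card fun _ h => (mem_trueBoxes.mp h).1).trans_lt (card_boxedBy_lt φ a)

theorem Sees.of_rel (h : M.R a s t) : Sees φ M a s t :=
  fun _ hχ => (mem_trueBoxes.mp hχ).2 t h

theorem Sees.of_subset (h : Sees φ M a s t) (hu : trueBoxes φ M a u ⊆ trueBoxes φ M a s) :
    Sees φ M a u t :=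
  fun _ hχ => h _ (hu hχ)

/-- States with the same true boxes satisfy the same diamonds. -/
theorem mem_sem_dia_of_trueBoxes_eq {χ : MFormula Ag PVar} (hχ : .dia a χ ∈ msub φ)
    (h : trueBoxes φ M a t = trueBoxes φ M a s) (hs : s ∈ MFormula.sem M (.dia a χ)) :
    t ∈ MFormula.sem M (.dia a χ) := by
  by_contra ht
  rw [← MFormula.mem_sem_neg] at ht
  have := mem_trueBoxes.mpr ⟨neg_mem_boxedBy_of_dia hχ, ht⟩
  rw [h] at this
  exact (MFormula.mem_sem_neg M (.dia a χ) s).mp (mem_trueBoxes.mp this).2 hs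

variable (φ M a) in
/-- Every instance over `s̄ub(φ)` of the axiom for `x` and agent `a` holds at `s`. -/
def SchemesAt (x : FrameCond) (s : M.W) : Prop :=
  ∀ ψ ∈ msbar φ, s ∈ MFormula.sem M (axInst x a ψ)

theorem SchemesAt.trueBoxes_subset_of_four (h : SchemesAt φ M a .four s) (hst : M.R a s t) :
    trueBoxes φ M a s ⊆ trueBoxes φ M a t := by
  intro χ hχ
  rw [mem_trueBoxes] at hχ ⊢
  have := (MFormula.mem_sem_impl ..).mp (h χ (Finset.mem_filter.mp hχ.1).1) hχ.2
  exact ⟨hχ.1, this t hst⟩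

theorem SchemesAt.box_of_five (h : SchemesAt φ M a .five s) (hst : M.R a s t)
    {χ : MFormula Ag PVar} (hχ : χ ∈ msbar φ) (ht : t ∈ MFormula.sem M (.box a χ)) :
    s ∈ MFormula.sem M (.box a χ) :=
  (MFormula.mem_sem_impl ..).mp (h χ hχ) ⟨t, hst, ht⟩

theorem SchemesAt.trueBoxes_subset_of_five (h : SchemesAt φ M a .five s) (hst : M.R a s t) :
    trueBoxes φ M a t ⊆ trueBoxes φ M a s := by
  intro χ hχ
  rw [mem_trueBoxes] at hχ ⊢
  exact ⟨hχ.1, h.box_of_five hst (Finset.mem_filter.mp hχ.1).1 hχ.2⟩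

/-- If a box fails at one successor of `s`, it fails at all of them. -/
theorem SchemesAt.trueBoxes_siblings_subset (hs : SchemesAt φ M a .five s)
    (hu : SchemesAt φ M a .five u) (hst : M.R a s t) (hsu : M.R a s u) :
    trueBoxes φ M a t ⊆ trueBoxes φ M a u := by
  intro χ hχ
  rw [mem_trueBoxes] at hχ ⊢
  obtain ⟨hmem, hbox⟩ := Finset.mem_filter.mp hχ.1
  refine ⟨hχ.1, by_contra fun hn => ?_⟩
  have h1 : u ∈ MFormula.sem M (.box a (MFormula.box a χ).neg) := fun v huv =>
    (MFormula.mem_sem_neg ..).mpr fun hv => hn (hu.box_of_five huv hmem hv)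
  exact (MFormula.mem_sem_neg ..).mp (hs.box_of_five hsu (neg_mem_msbar hbox) h1 t hst) hχ.2

theorem SchemesAt.trueBoxes_siblings_eq (hs : SchemesAt φ M a .five s)
    (ht : SchemesAt φ M a .five t) (hu : SchemesAt φ M a .five u) (hst : M.R a s t)
    (hsu : M.R a s u) : trueBoxes φ M a t = trueBoxes φ M a u :=
  (hs.trueBoxes_siblings_subset hu hst hsu).antisymm (hs.trueBoxes_siblings_subset ht hsu hst)

/-- From the first `a`-successor on, the true boxes do not change any more. -/
theorem SchemesAt.trueBoxes_chain_eq (hs : SchemesAt φ M a .five s)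
    (ht : SchemesAt φ M a .five t) (hu : SchemesAt φ M a .five u) (hst : M.R a s t)
    (htu : M.R a t u) : trueBoxes φ M a u = trueBoxes φ M a t := by
  refine (ht.trueBoxes_subset_of_five htu).antisymm fun χ hχ => by_contra fun hn => ?_
  have hm := (mem_trueBoxes.mp hχ).1
  have h1 : t ∈ MFormula.sem M (.box a (MFormula.box a χ).neg) := fun v htv =>
    (MFormula.mem_sem_neg ..).mpr fun hv =>
      hn (ht.trueBoxes_siblings_subset hu htv htu (mem_trueBoxes.mpr ⟨hm, hv⟩))
  exact (MFormula.mem_sem_neg ..).mp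
    (hs.box_of_five hst (neg_mem_msbar (Finset.mem_filter.mp hm).2) h1 t hst)
    (mem_trueBoxes.mp hχ).2

end BoxTypes

/-- `M`, seen from `w`, is close enough to an `L`-model: near `w` the axioms of `L` hold for the
formulas of `s̄ub(φ)`, and all but the last condition of each agent hold outright. -/
structure LocallyModels (L : Ag → Set FrameCond) (M : KModel Ag PVar) (w : M.W)
    (φ : MFormula Ag PVar) (m : ℕ) : Prop where
  one_le : 1 ≤ m
  size_le : ∀ a, FrameCond.four ∈ L a ∨ FrameCond.five ∈ L a → msize φ ≤ m
  schemes : ∀ a, ∀ c ∈ L a, ∀ s, Within M w (φ.md * m) s → SchemesAt φ M a c s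
  lower : ∀ a, ∀ c ∈ L a, ∀ c' ∈ L a, condIdx c < condIdx c' → SatisfiesCond (M.R a) c

/-- The distance from the root allowed at level `k`. -/
def radius (φ : MFormula Ag PVar) (m k : ℕ) : ℕ := (φ.md - k) * m

theorem radius_le (φ : MFormula Ag PVar) (m k : ℕ) : radius φ m k ≤ φ.md * m :=
  Nat.mul_le_mul_right m (Nat.sub_le _ _)

theorem radius_succ_add {φ : MFormula Ag PVar} {k : ℕ} (m : ℕ) (h : k + 1 ≤ φ.md) :
    radius φ m (k + 1) + m = radius φ m k := by
  rw [radius, radius, show φ.md - k = φ.md - (k + 1) + 1 by omega, Nat.succ_mul]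

/-- What is known of a state that was entered by a step of a transitive or euclidean agent `a`:
its true boxes are those of a state close enough to have all its successors available. -/
structure Anchored (L : Ag → Set FrameCond) (M : KModel Ag PVar) (w : M.W)
    (φ : MFormula Ag PVar) (m : ℕ) (a : Ag) (k : ℕ) (s : M.W) : Prop where
  lev_lt : k + 1 ≤ φ.md
  trans : FrameCond.five ∉ L a → (FrameCond.B ∈ L a → Sees φ M a s s) ∧
    ∃ t, trueBoxes φ M a t = trueBoxes φ M a s ∧
      Within M w (radius φ m (k + 1) + (trueBoxes φ M a t).card) t
  eucl : FrameCond.five ∈ L a → Sees φ M a s s ∧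
    ∃ r t, M.R a r t ∧ Within M w (radius φ m (k + 1)) r ∧
      trueBoxes φ M a t = trueBoxes φ M a s

/-- States of the `L`-model built from `M`: a state of `M`, the modal depth up to which truth is
preserved, and the transitive or euclidean agent whose step led here, if any. -/
structure Node (L : Ag → Set FrameCond) (M : KModel Ag PVar) (w : M.W)
    (φ : MFormula Ag PVar) (m : ℕ) where
  pt : M.W
  lev : ℕ
  tag : Option Ag
  lev_le : lev ≤ φ.md
  near : Within M w (radius φ m lev) pt
  anchored : ∀ a, tag = some a → Anchored L M w φ m a lev pt

namespace Node

variable {L : Ag → Set FrameCond} {M : KModel Ag PVar} {w : M.W} {φ : MFormula Ag PVar} {m : ℕ}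

/-- The modal depth up to which the `a`-boxes of a node matter. -/
def height (a : Ag) (p : Node L M w φ m) : ℕ := if p.tag = some a then p.lev + 1 else p.lev

theorem lev_le_height (a : Ag) (p : Node L M w φ m) : p.lev ≤ p.height a := by
  unfold height; split <;> omega

theorem height_le (a : Ag) (p : Node L M w φ m) : p.height a ≤ p.lev + 1 := by
  unfold height; split <;> omega

theorem height_of_tag {a : Ag} {p : Node L M w φ m} (h : p.tag = some a) :
    p.height a = p.lev + 1 := if_pos h

theorem height_of_ne_tag {a : Ag} {p : Node L M w φ m} (h : p.tag ≠ some a) :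
    p.height a = p.lev := if_neg h

/-- The accessibility relation of an agent that is neither transitive nor euclidean. -/
def stepRel (a : Ag) (p q : Node L M w φ m) : Prop :=
  (q.lev + 1 = p.lev ∧ M.R a p.pt q.pt) ∨
  (FrameCond.B ∈ L a ∧ p.lev + 1 = q.lev ∧ M.R a q.pt p.pt) ∨
  ((FrameCond.T ∈ L a ∨ p.lev = 0) ∧ p = q)

/-- The link between nodes of equal height for a transitive agent. -/
def transLink (a : Ag) (p q : Node L M w φ m) : Prop :=
  (trueBoxes φ M a p.pt ⊆ trueBoxes φ M a q.pt ∧ Sees φ M a p.pt q.pt) ∧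
  (FrameCond.B ∈ L a →
    trueBoxes φ M a q.pt ⊆ trueBoxes φ M a p.pt ∧ Sees φ M a q.pt p.pt)

/-- Agent `a` has a condition that, with euclideanness, gives all linked nodes the same boxes. -/
def Uniform (L : Ag → Set FrameCond) (a : Ag) : Prop :=
  FrameCond.T ∈ L a ∨ FrameCond.B ∈ L a ∨ FrameCond.four ∈ L a

/-- The link between nodes of equal height for a euclidean agent. -/
def euclLink (a : Ag) (p q : Node L M w φ m) : Prop :=
  (Uniform L a ∧ trueBoxes φ M a p.pt = trueBoxes φ M a q.pt ∧ Sees φ M a q.pt q.pt ∧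
    (FrameCond.B ∈ L a → Sees φ M a p.pt p.pt)) ∨
  (¬ Uniform L a ∧ q.tag = some a ∧
    ((p.tag = some a ∧ trueBoxes φ M a p.pt = trueBoxes φ M a q.pt) ∨
      (p.tag ≠ some a ∧ M.R a p.pt q.pt)))

/-- Link nodes of equal positive height by `C`, and nodes of height zero to themselves only. -/
def layered (a : Ag) (C : Node L M w φ m → Node L M w φ m → Prop) (p q : Node L M w φ m) : Prop :=
  p.height a = q.height a ∧ ((p.height a = 0 ∧ p = q) ∨ (p.height a ≠ 0 ∧ C p q))

/-- The accessibility relation on nodes. -/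
def rel (a : Ag) (p q : Node L M w φ m) : Prop :=
  (FrameCond.five ∈ L a ∧ layered a (euclLink a) p q) ∨
  (FrameCond.five ∉ L a ∧ FrameCond.four ∈ L a ∧ layered a (transLink a) p q) ∨
  (FrameCond.five ∉ L a ∧ FrameCond.four ∉ L a ∧ stepRel a p q)

theorem rel_eq_of_five {a : Ag} (h : FrameCond.five ∈ L a) :
    rel (M := M) (w := w) (φ := φ) (m := m) a = layered (L := L) a (euclLink a) := by
  funext p q; simp [rel, h]

theorem rel_eq_of_four {a : Ag} (h5 : FrameCond.five ∉ L a) (h : FrameCond.four ∈ L a) :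
    rel (M := M) (w := w) (φ := φ) (m := m) a = layered (L := L) a (transLink a) := by
  funext p q; simp [rel, h5, h]

theorem rel_eq_of_not {a : Ag} (h5 : FrameCond.five ∉ L a) (h : FrameCond.four ∉ L a) :
    rel (M := M) (w := w) (φ := φ) (m := m) a = stepRel (L := L) a := by
  funext p q; simp [rel, h5, h]

/-- A condition holds of a layered relation if it holds of the link at positive heights. -/
theorem satisfiesCond_layered {a : Ag} {C : Node L M w φ m → Node L M w φ m → Prop}
    {c : FrameCond}
    (hD : c = .D → ∀ p, p.height a ≠ 0 → ∃ q, p.height a = q.height a ∧ C p q)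
    (hT : c = .T → ∀ p, C p p)
    (hB : c = .B → ∀ p q, C p q → C q p)
    (h4 : c = .four → ∀ p q r, C p q → C q r → C p r)
    (h5 : c = .five → ∀ p q r, C p q → C p r → C q r) :
    SatisfiesCond (layered a C) c := by
  cases c with
  | D =>
    intro p
    by_cases h0 : p.height a = 0
    · exact ⟨p, rfl, .inl ⟨h0, rfl⟩⟩
    · obtain ⟨q, hq, hC⟩ := hD rfl p h0
      exact ⟨q, hq, .inr ⟨h0, hC⟩⟩
  | T =>
    intro p
    by_cases h0 : p.height a = 0
    · exact ⟨rfl, .inl ⟨h0, rfl⟩⟩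
    · exact ⟨rfl, .inr ⟨h0, hT rfl p⟩⟩
  | B =>
    rintro p q ⟨he, ⟨h0, rfl⟩ | ⟨h0, hC⟩⟩
    · exact ⟨rfl, .inl ⟨h0, rfl⟩⟩
    · exact ⟨he.symm, .inr ⟨he ▸ h0, hB rfl p q hC⟩⟩
  | four =>
    rintro p q r ⟨he, ⟨h0, rfl⟩ | ⟨h0, hC⟩⟩ hqr
    · exact hqr
    · obtain ⟨he', ⟨h0', rfl⟩ | ⟨-, hC'⟩⟩ := hqr
      · exact absurd (he.trans h0') h0
      · exact ⟨he.trans he', .inr ⟨h0, h4 rfl p q r hC hC'⟩⟩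
  | five =>
    rintro p q r ⟨he, ⟨h0, rfl⟩ | ⟨h0, hC⟩⟩ hpr
    · exact hpr
    · obtain ⟨he', ⟨h0', rfl⟩ | ⟨-, hC'⟩⟩ := hpr
      · exact absurd h0' h0
      · exact ⟨he.symm.trans he', .inr ⟨he ▸ h0, h5 rfl p q r hC hC'⟩⟩

theorem schemesAt (H : LocallyModels L M w φ m) (p : Node L M w φ m) {a : Ag} {c : FrameCond}
    (hc : c ∈ L a) : SchemesAt φ M a c p.pt :=
  H.schemes a c hc p.pt (p.near.mono (radius_le φ m p.lev))

theorem schemesAt_four_of_anchor (H : LocallyModels L M w φ m) {a : Ag}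
    (h4 : FrameCond.four ∈ L a) {k : ℕ} (hk : k + 1 ≤ φ.md) {s : M.W}
    (hs : Within M w (radius φ m (k + 1) + (trueBoxes φ M a s).card) s) :
    SchemesAt φ M a .four s := by
  have hr := radius_succ_add m hk
  have hm := H.size_le a (.inl h4)
  have hc : (trueBoxes φ M a s).card < msize φ := card_trueBoxes_lt
  exact H.schemes a _ h4 s (hs.mono (le_trans (by omega) (radius_le φ m k)))

/-- Steps out of a state that may serve as an anchor of a transitive agent. -/
theorem anchored_of_trans (H : LocallyModels L M w φ m) {a : Ag} (h5 : FrameCond.five ∉ L a)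
    (h4 : FrameCond.four ∈ L a) {k : ℕ} (hk : k + 1 ≤ φ.md) {s t : M.W}
    (hs : Within M w (radius φ m (k + 1) + (trueBoxes φ M a s).card) s) (hst : M.R a s t) :
    Within M w (radius φ m k) t ∧ Anchored L M w φ m a k t := by
  have hr := radius_succ_add m hk
  have hm := H.size_le a (.inl h4)
  have hc : (trueBoxes φ M a s).card < msize φ := card_trueBoxes_lt
  have ht : Within M w (radius φ m k) t := (hs.step hst).mono (by omega)
  have hsub := (schemesAt_four_of_anchor H h4 hk hs).trueBoxes_subset_of_four hst
  refine ⟨ht, hk, fun _ => ⟨fun hB => ?_, ?_⟩, fun h => absurd h h5⟩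
  · have hts : M.R a t s := H.lower a _ hB _ h4 (by decide) s t hst
    exact (Sees.of_rel hst).of_subset
      ((H.schemes a _ h4 t (ht.mono (radius_le φ m k))).trueBoxes_subset_of_four hts)
  · by_cases he : trueBoxes φ M a s = trueBoxes φ M a t
    · exact ⟨s, he, hs⟩
    · have := Finset.card_lt_card (hsub.ssubset_of_ne he)
      exact ⟨t, rfl, (hs.step hst).mono (by omega)⟩

/-- Each node of positive height has the same true boxes as a state all of whose successors are
linked to that node. -/
theorem exists_links_of_trans (H : LocallyModels L M w φ m) {a : Ag}
    (h5 : FrameCond.five ∉ L a) (h4 : FrameCond.four ∈ L a) (p : Node L M w φ m)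
    (hp : p.height a ≠ 0) :
    ∃ s, trueBoxes φ M a s = trueBoxes φ M a p.pt ∧ ∀ t, M.R a s t →
      ∃ q : Node L M w φ m, q.pt = t ∧ p.height a = q.height a ∧ transLink a p q := by
  obtain ⟨k, hk, hh, s, hs, hsw, hsees⟩ : ∃ k, k + 1 ≤ φ.md ∧ p.height a = k + 1 ∧
      ∃ s, trueBoxes φ M a s = trueBoxes φ M a p.pt ∧
        Within M w (radius φ m (k + 1) + (trueBoxes φ M a s).card) s ∧
        (FrameCond.B ∈ L a → (∃ t, M.R a s t) → Sees φ M a p.pt p.pt) := by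
    by_cases htag : p.tag = some a
    · obtain ⟨hk, ht, -⟩ := p.anchored a htag
      obtain ⟨hB, s, hs, hsw⟩ := ht h5
      exact ⟨p.lev, hk, height_of_tag htag, s, hs, hsw, fun h _ => hB h⟩
    · rw [height_of_ne_tag htag] at hp
      obtain ⟨k, hk⟩ := Nat.exists_eq_add_one_of_ne_zero hp
      have hle := p.lev_le
      refine ⟨k, by omega, by rw [height_of_ne_tag htag, hk], p.pt, rfl,
        (hk ▸ p.near).mono (by omega), fun hB ⟨t, hst⟩ => ?_⟩
      have hts : M.R a t p.pt := H.lower a _ hB _ h4 (by decide) _ _ hst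
      exact (Sees.of_rel hts).of_subset ((p.schemesAt H h4).trueBoxes_subset_of_four hst)
  refine ⟨s, hs, fun t hst => ?_⟩
  obtain ⟨htw, hta⟩ := anchored_of_trans H h5 h4 hk hsw hst
  have hsub := (schemesAt_four_of_anchor H h4 hk hsw).trueBoxes_subset_of_four hst
  refine ⟨⟨t, k, some a, by omega, htw, fun b hb => by cases hb; exact hta⟩, rfl,
    by rw [hh, height_of_tag rfl], ⟨hs ▸ hsub, (Sees.of_rel hst).of_subset hs.ge⟩, fun hB => ?_⟩
  have hts : M.R a t s := H.lower a _ hB _ h4 (by decide) s t hst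
  have hsub' := (H.schemes a _ h4 t (htw.mono (radius_le φ m k))).trueBoxes_subset_of_four hts
  rw [hs] at hsub'
  exact ⟨hsub', (hsees hB ⟨t, hst⟩).of_subset hsub'⟩

theorem satisfiesCond_trans (H : LocallyModels L M w φ m) {a : Ag}
    (h5 : FrameCond.five ∉ L a) (h4 : FrameCond.four ∈ L a) {c : FrameCond} (hc : c ∈ L a) :
    SatisfiesCond (layered (L := L) (M := M) (w := w) (φ := φ) (m := m) a (transLink a)) c := by
  apply satisfiesCond_layered
  · rintro rfl p hp
    obtain ⟨s, -, hs⟩ := exists_links_of_trans H h5 h4 p hp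
    obtain ⟨t, ht⟩ := H.lower a _ hc _ h4 (by decide) s
    obtain ⟨q, -, hq⟩ := hs t ht
    exact ⟨q, hq⟩
  · rintro rfl p
    have := Sees.of_rel (φ := φ) (H.lower a _ hc _ h4 (by decide) p.pt)
    exact ⟨⟨subset_rfl, this⟩, fun _ => ⟨subset_rfl, this⟩⟩
  · rintro rfl p q ⟨h, h'⟩
    exact ⟨h' hc, fun _ => h⟩
  · rintro rfl p q r ⟨h, h'⟩ ⟨g, g'⟩
    exact ⟨⟨h.1.trans g.1, g.2.of_subset h.1⟩, fun hB =>
      ⟨(g' hB).1.trans (h' hB).1, (h' hB).2.of_subset (g' hB).1⟩⟩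
  · rintro rfl
    exact absurd hc h5

/-- Each node of positive height has the same true boxes as a state all of whose successors are
linked to that node. -/
theorem exists_links_of_eucl (H : LocallyModels L M w φ m) {a : Ag}
    (h5 : FrameCond.five ∈ L a) (p : Node L M w φ m) (hp : p.height a ≠ 0) :
    ∃ s, trueBoxes φ M a s = trueBoxes φ M a p.pt ∧ ∀ t, M.R a s t →
      ∃ q : Node L M w φ m, q.pt = t ∧ p.height a = q.height a ∧ euclLink a p q := by
  have hm := H.size_le a (.inr h5)
  by_cases htag : p.tag = some a
  · obtain ⟨hk, -, he⟩ := p.anchored a htag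
    obtain ⟨hpp, r, s, hrs, hr, hs⟩ := he h5
    refine ⟨s, hs, fun t hst => ?_⟩
    have h2 := two_le_msize (φ := φ) (by omega)
    have hrad := radius_succ_add m hk
    have hsw : Within M w (radius φ m p.lev) s := (hr.step hrs).mono (by omega)
    have htw : Within M w (radius φ m p.lev) t := ((hr.step hrs).step hst).mono (by omega)
    have hts := SchemesAt.trueBoxes_chain_eq
      (H.schemes a _ h5 r (hr.mono (radius_le ..))) (H.schemes a _ h5 s (hsw.mono (radius_le ..)))
      (H.schemes a _ h5 t (htw.mono (radius_le ..))) hrs hst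
    have htt : Sees φ M a t t := (Sees.of_rel hst).of_subset hts.le
    refine ⟨⟨t, p.lev, some a, p.lev_le, htw, fun b hb => ?_⟩, rfl,
      by rw [height_of_tag htag, height_of_tag rfl], ?_⟩
    · cases hb
      exact ⟨hk, fun h => absurd h5 h, fun _ => ⟨htt, r, s, hrs, hr, hts.symm⟩⟩
    · by_cases hu : Uniform L a
      · exact .inl ⟨hu, hs.symm.trans hts.symm, htt, fun _ => hpp⟩
      · exact .inr ⟨hu, rfl, .inl ⟨htag, hs.symm.trans hts.symm⟩⟩
  · rw [height_of_ne_tag htag] at hp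
    obtain ⟨k, hk⟩ := Nat.exists_eq_add_one_of_ne_zero hp
    have hle := p.lev_le
    have hrad := radius_succ_add (φ := φ) (k := k) m (by omega)
    have hpw : Within M w (radius φ m (k + 1)) p.pt := hk ▸ p.near
    refine ⟨p.pt, rfl, fun t hst => ?_⟩
    have hone := H.one_le
    have htw : Within M w (radius φ m k) t := (hpw.step hst).mono (by omega)
    have hpax := p.schemesAt H h5
    have htax := H.schemes a _ h5 t (htw.mono (radius_le ..))
    have htt : Sees φ M a t t :=
      (Sees.of_rel hst).of_subset (hpax.trueBoxes_subset_of_five hst)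
    refine ⟨⟨t, k, some a, by omega, htw, fun b hb => ?_⟩, rfl,
      by rw [height_of_ne_tag htag, height_of_tag rfl, hk], ?_⟩
    · cases hb
      exact ⟨by omega, fun h => absurd h5 h, fun _ => ⟨htt, p.pt, t, hst, hpw, rfl⟩⟩
    · by_cases hu : Uniform L a
      · have hpt : trueBoxes φ M a p.pt = trueBoxes φ M a t := by
          rcases hu with hT | hB | h4
          · exact hpax.trueBoxes_siblings_eq hpax htax
              (H.lower a _ hT _ h5 (by decide) p.pt) hst
          · exact hpax.trueBoxes_chain_eq htax hpax hst
              (H.lower a _ hB _ h5 (by decide) _ _ hst)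
          · exact ((p.schemesAt H h4).trueBoxes_subset_of_four hst).antisymm
              (hpax.trueBoxes_subset_of_five hst)
        exact .inl ⟨hu, hpt, htt, fun hB =>
          (Sees.of_rel (H.lower a _ hB _ h5 (by decide) _ _ hst)).of_subset hpt.le⟩
      · exact .inr ⟨hu, rfl, .inr ⟨htag, hst⟩⟩

theorem satisfiesCond_eucl (H : LocallyModels L M w φ m) {a : Ag}
    (h5 : FrameCond.five ∈ L a) {c : FrameCond} (hc : c ∈ L a) :
    SatisfiesCond (layered (L := L) (M := M) (w := w) (φ := φ) (m := m) a (euclLink a)) c := by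
  apply satisfiesCond_layered
  · rintro rfl p hp
    obtain ⟨s, -, hs⟩ := exists_links_of_eucl H h5 p hp
    obtain ⟨t, ht⟩ := H.lower a _ hc _ h5 (by decide) s
    obtain ⟨q, -, hq⟩ := hs t ht
    exact ⟨q, hq⟩
  · rintro rfl p
    have := Sees.of_rel (φ := φ) (H.lower a _ hc _ h5 (by decide) p.pt)
    exact .inl ⟨.inl hc, rfl, this, fun _ => this⟩
  · rintro rfl p q (⟨hu, he, hq, hp⟩ | ⟨hu, -⟩)
    · exact .inl ⟨hu, he.symm, hp hc, fun _ => hq⟩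
    · exact absurd (.inr (.inl hc)) hu
  · rintro rfl p q r (⟨hu, he, hq, hp⟩ | ⟨hu, -⟩) hqr
    · rcases hqr with ⟨-, he', hr, -⟩ | ⟨hu', -⟩
      · exact .inl ⟨hu, he.trans he', hr, hp⟩
      · exact absurd hu hu'
    · exact absurd (.inr (.inr hc)) hu
  · rintro - p q r (⟨hu, he, hq, hp⟩ | ⟨hu, htq, hpq⟩) hpr
    · rcases hpr with ⟨-, he', hr, -⟩ | ⟨hu', -⟩
      · exact .inl ⟨hu, he.symm.trans he', hr, fun _ => hq⟩
      · exact absurd hu hu'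
    · rcases hpr with ⟨hu', -⟩ | ⟨-, htr, hpr⟩
      · exact absurd hu' hu
      · refine .inr ⟨hu, htr, .inl ⟨htq, ?_⟩⟩
        rcases hpq with ⟨h, he⟩ | ⟨h, hR⟩ <;> rcases hpr with ⟨h', he'⟩ | ⟨h', hR'⟩
        · exact he.symm.trans he'
        · exact absurd h h'
        · exact absurd h' h
        · exact (p.schemesAt H h5).trueBoxes_siblings_eq (q.schemesAt H h5) (r.schemesAt H h5)
            hR hR'

/-- Every successor of the state of a node carries a node one level below. -/
theorem exists_stepRel (H : LocallyModels L M w φ m) {a : Ag} {p : Node L M w φ m}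
    (hp : p.lev ≠ 0) {t : M.W} (ht : M.R a p.pt t) :
    ∃ q : Node L M w φ m, q.pt = t ∧ q.lev + 1 = p.lev ∧ stepRel a p q := by
  obtain ⟨k, hk⟩ := Nat.exists_eq_add_one_of_ne_zero hp
  have hle := p.lev_le
  have hrad := radius_succ_add (φ := φ) (k := k) m (by omega)
  have hone := H.one_le
  have hpw : Within M w (radius φ m (k + 1)) p.pt := hk ▸ p.near
  exact ⟨⟨t, k, none, by omega, (hpw.step ht).mono (by omega), nofun⟩, rfl, hk.symm,
    .inl ⟨hk.symm, ht⟩⟩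

theorem satisfiesCond_step (H : LocallyModels L M w φ m) {a : Ag}
    (h5 : FrameCond.five ∉ L a) (h4 : FrameCond.four ∉ L a) {c : FrameCond} (hc : c ∈ L a) :
    SatisfiesCond (stepRel (L := L) (M := M) (w := w) (φ := φ) (m := m) a) c := by
  cases c with
  | D =>
    intro p
    by_cases h0 : p.lev = 0
    · exact ⟨p, .inr (.inr ⟨.inr h0, rfl⟩)⟩
    · obtain ⟨t, ht, -⟩ := p.schemesAt H hc φ (msub_subset_msbar (mem_msub_self φ))
      obtain ⟨q, -, -, hq⟩ := exists_stepRel H h0 ht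
      exact ⟨q, hq⟩
  | T => exact fun p => .inr (.inr ⟨.inl hc, rfl⟩)
  | B =>
    rintro p q (⟨hl, hR⟩ | ⟨-, hl, hR⟩ | ⟨h, rfl⟩)
    · exact .inr (.inl ⟨hc, hl, hR⟩)
    · exact .inl ⟨hl, hR⟩
    · exact .inr (.inr ⟨h, rfl⟩)
  | four => exact absurd hc h4
  | five => exact absurd hc h5

/-- The Kripke model on nodes. -/
def model (p : Node L M w φ m) : KModel Ag PVar where
  W := Node L M w φ m
  h_ne := ⟨p⟩
  R := rel
  V q := M.V q.pt

theorem isLModel_model (H : LocallyModels L M w φ m) (p : Node L M w φ m) :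
    IsLModel L p.model := by
  intro a c hc
  change SatisfiesCond (rel a) c
  by_cases h5 : FrameCond.five ∈ L a
  · rw [rel_eq_of_five h5]
    exact satisfiesCond_eucl H h5 hc
  · by_cases h4 : FrameCond.four ∈ L a
    · rw [rel_eq_of_four h5 h4]
      exact satisfiesCond_trans H h5 h4 hc
    · rw [rel_eq_of_not h5 h4]
      exact satisfiesCond_step H h5 h4 hc

theorem sees_of_euclLink {a : Ag} (h5 : FrameCond.five ∈ L a) {p q : Node L M w φ m}
    (h : euclLink a p q) : Sees φ M a p.pt q.pt := by
  rcases h with ⟨-, he, hq, -⟩ | ⟨-, htq, ⟨-, he⟩ | ⟨-, hR⟩⟩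
  · exact hq.of_subset he.le
  · exact ((q.anchored a htq).eucl h5).1.of_subset he.le
  · exact Sees.of_rel hR

theorem mem_sem_of_rel (H : LocallyModels L M w φ m) {a : Ag} {p q : Node L M w φ m}
    {χ : MFormula Ag PVar} (hχ : .box a χ ∈ msub φ) (hpq : rel a p q) (hlev : χ.md < p.lev)
    (h : p.pt ∈ MFormula.sem M (.box a χ)) : q.pt ∈ MFormula.sem M χ ∧ χ.md ≤ q.lev := by
  have hb := mem_boxedBy_of_box hχ
  have hsees : ∀ C, layered a C p q → (C p q → Sees φ M a p.pt q.pt) →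
      q.pt ∈ MFormula.sem M χ ∧ χ.md ≤ q.lev := by
    rintro C ⟨he, hC⟩ hS
    have h1 := p.lev_le_height a
    have h2 := q.height_le a
    rcases hC with ⟨h0, -⟩ | ⟨-, hC⟩
    · omega
    · exact ⟨hS hC χ (mem_trueBoxes.mpr ⟨hb, h⟩), by omega⟩
  have hbar := (Finset.mem_filter.mp hb).1
  rcases hpq with ⟨h5, hpq⟩ | ⟨-, -, hpq⟩ | ⟨-, -, ⟨hl, hR⟩ | ⟨hB, hl, hR⟩ | ⟨hT, rfl⟩⟩
  · exact hsees _ hpq (sees_of_euclLink h5)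
  · exact hsees _ hpq fun hC => hC.1.2
  · exact ⟨h _ hR, by omega⟩
  · exact ⟨(MFormula.mem_sem_impl ..).mp (q.schemesAt H hB χ hbar) ⟨_, hR, h⟩, by omega⟩
  · rcases hT with hT | h0
    · exact ⟨(MFormula.mem_sem_impl ..).mp (p.schemesAt H hT χ hbar) h, by omega⟩
    · omega

theorem exists_rel (H : LocallyModels L M w φ m) {a : Ag} {p : Node L M w φ m}
    {χ : MFormula Ag PVar} (hχ : .dia a χ ∈ msub φ) (hlev : χ.md < p.lev)
    (h : p.pt ∈ MFormula.sem M (.dia a χ)) :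
    ∃ q, rel a p q ∧ q.pt ∈ MFormula.sem M χ ∧ χ.md ≤ q.lev := by
  have h1 := p.lev_le_height a
  have hlink : ∀ C : Node L M w φ m → Node L M w φ m → Prop,
      (∃ s, trueBoxes φ M a s = trueBoxes φ M a p.pt ∧ ∀ t, M.R a s t →
        ∃ q : Node L M w φ m, q.pt = t ∧ p.height a = q.height a ∧ C p q) →
      ∃ q, layered a C p q ∧ q.pt ∈ MFormula.sem M χ ∧ χ.md ≤ q.lev := by
    rintro C ⟨s, hs, hlinks⟩
    obtain ⟨t, hst, ht⟩ := mem_sem_dia_of_trueBoxes_eq hχ hs h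
    obtain ⟨q, rfl, he, hC⟩ := hlinks t hst
    have h2 := q.height_le a
    exact ⟨q, ⟨he, .inr ⟨by omega, hC⟩⟩, ht, by omega⟩
  by_cases h5 : FrameCond.five ∈ L a
  · rw [rel_eq_of_five h5]
    exact hlink _ (exists_links_of_eucl H h5 p (by omega))
  · by_cases h4 : FrameCond.four ∈ L a
    · rw [rel_eq_of_four h5 h4]
      exact hlink _ (exists_links_of_trans H h5 h4 p (by omega))
    · rw [rel_eq_of_not h5 h4]
      obtain ⟨t, hst, ht⟩ := h
      obtain ⟨q, rfl, hl, hq⟩ := exists_stepRel H (by omega) hst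
      exact ⟨q, hq, ht, by omega⟩

end Node

theorem LocallyModels.satisfiable {L : Ag → Set FrameCond} {M : KModel Ag PVar} {w : M.W}
    {φ : MFormula Ag PVar} {m : ℕ} (H : LocallyModels L M w φ m) (hw : w ∈ MFormula.sem M φ) :
    MSatisfiable L φ := by
  let p : Node L M w φ m := ⟨w, φ.md, none, le_rfl, ⟨0, Nat.zero_le _, rfl⟩, nofun⟩
  refine ⟨p.model, Node.isLModel_model H p, p, ?_⟩
  exact mem_sem_of_level (M' := p.model) (φ := φ) Node.pt Node.lev (fun _ => rfl)
    (fun a q r χ hχ hqr hl h => Node.mem_sem_of_rel H hχ hqr hl h)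
    (fun a q χ hχ hl h => Node.exists_rel H hχ hl h) (mem_msub_self φ) le_rfl hw

/-- correctness of the one-step translation. -/
theorem one_step_translation_correct [Fintype Ag] [Nonempty Ag]
    (A : Finset Ag) (x : FrameCond) (L1 L2 : Ag → Set FrameCond)
    (hA : ∀ a ∈ A, L1 a = L2 a ∪ {x})
    (hA' : ∀ a ∉ A, L1 a = L2 a)
    (hL2 : ∀ (a : Ag), ∀ c ∈ L2 a, condIdx c < condIdx x)
    (φ : MFormula Ag PVar) :
    MSatisfiable L1 φ ↔ MSatisfiable L2 (translX A x φ) := by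
  constructor
  · rintro ⟨M, hM, w, hw⟩
    refine ⟨M, fun a c hc => hM a c ?_, w, hw, mem_sem_invd_of_valid (fun s => ?_) _ w⟩
    · by_cases ha : a ∈ A
      · exact hA a ha ▸ .inl hc
      · exact hA' a ha ▸ hc
    · simp only [mem_sem_bigAndM, List.mem_map, Finset.mem_toList]
      rintro _ ⟨ψ, -, rfl⟩
      simp only [mem_sem_bigAndM, List.mem_map, Finset.mem_toList]
      rintro _ ⟨a, ha, rfl⟩
      exact mem_sem_axInst (hM a x (hA a ha ▸ .inr rfl)) ψ s
  · rintro ⟨M, hM, w, hw, hinv⟩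
    have hL1 : ∀ a, ∀ c ∈ L1 a, c ∈ L2 a ∨ (a ∈ A ∧ c = x) := by
      intro a c hc
      by_cases ha : a ∈ A
      · rw [hA a ha] at hc
        exact hc.imp id fun h => ⟨ha, h⟩
      · exact .inl (hA' a ha ▸ hc)
    have hidx : ∀ a, ∀ c ∈ L1 a, condIdx c ≤ condIdx x := by
      intro a c hc
      rcases hL1 a c hc with h | ⟨-, rfl⟩
      · exact (hL2 a c h).le
      · exact le_rfl
    let m : ℕ := if x = FrameCond.four ∨ x = FrameCond.five then msize φ else 1
    have hd : (if x = FrameCond.four ∨ x = FrameCond.five then φ.md * msize φ else φ.md)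
        = φ.md * m := by
      simp only [m]; split <;> simp
    rw [hd] at hinv
    refine LocallyModels.satisfiable (w := w) (m := m) ⟨?_, ?_, ?_, ?_⟩ hw
    · simp only [m]
      split
      · exact msize_pos φ
      · exact le_rfl
    · intro a h
      have hx : x = .four ∨ x = .five := by
        rcases h with h | h <;> have := hidx a _ h <;> cases x <;> simp_all [condIdx]
      simp [m, hx]
    · intro a c hc s hs ψ hψ
      rcases hL1 a c hc with h | ⟨ha, rfl⟩
      · exact mem_sem_axInst (hM a c h) ψ s
      · have := mem_sem_of_invd hinv hs
        simp only [mem_sem_bigAndM, List.mem_map, Finset.mem_toList] at this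
        have := this _ ⟨ψ, hψ, rfl⟩
        simp only [mem_sem_bigAndM, List.mem_map, Finset.mem_toList] at this
        exact this _ ⟨a, ha, rfl⟩
    · intro a c hc c' hc' hlt
      rcases hL1 a c hc with h | ⟨-, rfl⟩
      · exact hM a c h
      · exact absurd (hidx a c' hc') (by omega)
end

section
/- Let M = (W,R,V) be an L-model, w ∈ W, and φ a closed formula such that (M,w) ⊨ φ and each recursion variable of φ is bound by a unique fixed-point subformula. Then there exists an lfp-finite dependency relation on M and φ. -/
/-- Formulas of the multi-agent modal μ-calculus. -/
inductive Formula (Ag PVar LVar : Type) : Type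
  | prop  : PVar → Formula Ag PVar LVar
  | nprop : PVar → Formula Ag PVar LVar
  | tt    : Formula Ag PVar LVar
  | ff    : Formula Ag PVar LVar
  | var   : LVar → Formula Ag PVar LVar
  | and   : Formula Ag PVar LVar → Formula Ag PVar LVar → Formula Ag PVar LVar
  | or    : Formula Ag PVar LVar → Formula Ag PVar LVar → Formula Ag PVar LVar
  | dia   : Ag → Formula Ag PVar LVar → Formula Ag PVar LVar
  | box   : Ag → Formula Ag PVar LVar → Formula Ag PVar LVar
  | mu    : LVar → Formula Ag PVar LVar → Formula Ag PVar LVar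
  | nu    : LVar → Formula Ag PVar LVar → Formula Ag PVar LVar
  deriving DecidableEq

variable {Ag PVar LVar : Type}

/-- The μ-calculus semantics of a formula relative to an environment. -/
def Formula.sem [DecidableEq LVar] (M : KModel Ag PVar) :
    Formula Ag PVar LVar → (LVar → Set M.W) → Set M.W
  | .prop p, _ => {s | p ∈ M.V s}
  | .nprop p, _ => {s | p ∉ M.V s}
  | .tt, _ => Set.univ
  | .ff, _ => ∅
  | .var X, ρ => ρ X
  | .and φ ψ, ρ => Formula.sem M φ ρ ∩ Formula.sem M ψ ρ
  | .or φ ψ, ρ => Formula.sem M φ ρ ∪ Formula.sem M ψ ρ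
  | .box a φ, ρ => {s | ∀ t, M.R a s t → t ∈ Formula.sem M φ ρ}
  | .dia a φ, ρ => {s | ∃ t, M.R a s t ∧ t ∈ Formula.sem M φ ρ}
  | .mu X φ, ρ => ⋂₀ {S | Formula.sem M φ (Function.update ρ X S) ⊆ S}
  | .nu X φ, ρ => ⋃₀ {S | S ⊆ Formula.sem M φ (Function.update ρ X S)}

/-- Free recursion variables of a formula. -/
def Formula.freeVars : Formula Ag PVar LVar → Set LVar
  | .var X => {X}
  | .and φ ψ => Formula.freeVars φ ∪ Formula.freeVars ψ
  | .or φ ψ => Formula.freeVars φ ∪ Formula.freeVars ψ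
  | .dia _ φ => Formula.freeVars φ
  | .box _ φ => Formula.freeVars φ
  | .mu X φ => Formula.freeVars φ \ {X}
  | .nu X φ => Formula.freeVars φ \ {X}
  | _ => ∅

/-- A formula is closed when it has no free recursion variables. -/
def Formula.Closed (φ : Formula Ag PVar LVar) : Prop := φ.freeVars = ∅

/-- A formula is L-satisfiable when it holds at some state of some L-model. -/
def LSatisfiable [DecidableEq LVar] (L : Ag → Set FrameCond)
    (φ : Formula Ag PVar LVar) : Prop :=
  ∃ (M : KModel Ag PVar), IsLModel L M ∧
    ∃ (w : M.W) (ρ : LVar → Set M.W), w ∈ Formula.sem M φ ρ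

/-- Finite conjunction of a list of formulas (empty conjunction is tt). -/
def bigAnd : List (Formula Ag PVar LVar) → Formula Ag PVar LVar
  | [] => .tt
  | φ :: l => .and φ (bigAnd l)

/-- Syntactic negation, defined by the usual dualities. -/
def Formula.neg : Formula Ag PVar LVar → Formula Ag PVar LVar
  | .prop p => .nprop p
  | .nprop p => .prop p
  | .tt => .ff
  | .ff => .tt
  | .var X => .var X
  | .and φ ψ => .or (Formula.neg φ) (Formula.neg ψ)
  | .or φ ψ => .and (Formula.neg φ) (Formula.neg ψ)
  | .dia a φ => .box a (Formula.neg φ)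
  | .box a φ => .dia a (Formula.neg φ)
  | .mu X φ => .nu X (Formula.neg φ)
  | .nu X φ => .mu X (Formula.neg φ)

/-- Implication φ → ψ, encoded as ¬φ ∨ ψ. -/
def Formula.impl (φ ψ : Formula Ag PVar LVar) : Formula Ag PVar LVar := .or φ.neg ψ

/-- The list of subformulas of a formula. -/
def Formula.subList : Formula Ag PVar LVar → List (Formula Ag PVar LVar)
  | .and φ ψ => .and φ ψ :: (Formula.subList φ ++ Formula.subList ψ)
  | .or φ ψ => .or φ ψ :: (Formula.subList φ ++ Formula.subList ψ)
  | .dia a φ => .dia a φ :: Formula.subList φ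
  | .box a φ => .box a φ :: Formula.subList φ
  | .mu X φ => .mu X φ :: Formula.subList φ
  | .nu X φ => .nu X φ :: Formula.subList φ
  | φ => [φ]

/-- The (first) fixed-point subformula binding X, if any. -/
def findFx [DecidableEq LVar] (X : LVar) :
    Formula Ag PVar LVar → Option (Formula Ag PVar LVar)
  | .and φ ψ => (findFx X φ).orElse (fun _ => findFx X ψ)
  | .or φ ψ => (findFx X φ).orElse (fun _ => findFx X ψ)
  | .dia _ φ => findFx X φ
  | .box _ φ => findFx X φ
  | .mu Y φ => if Y = X then some (.mu Y φ) else findFx X φ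
  | .nu Y φ => if Y = X then some (.nu Y φ) else findFx X φ
  | _ => none

/-- fx(X): the unique fixed-point subformula of the top formula binding X. -/
def fxOf [DecidableEq LVar] (Φ : Formula Ag PVar LVar) (X : LVar) :
    Formula Ag PVar LVar :=
  (findFx X Φ).getD (.var X)

/-- Number of binders of the variable X in a formula. -/
def binderCountV [DecidableEq LVar] (X : LVar) : Formula Ag PVar LVar → ℕ
  | .and φ ψ => binderCountV X φ + binderCountV X ψ
  | .or φ ψ => binderCountV X φ + binderCountV X ψ
  | .dia _ φ => binderCountV X φ
  | .box _ φ => binderCountV X φ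
  | .mu Y φ => (if Y = X then 1 else 0) + binderCountV X φ
  | .nu Y φ => (if Y = X then 1 else 0) + binderCountV X φ
  | _ => 0

/-- Each recursion variable is bound by at most one fixed-point subformula. -/
def WellNamed [DecidableEq LVar] (φ : Formula Ag PVar LVar) : Prop :=
  ∀ X : LVar, binderCountV X φ ≤ 1

/-- `D` is a dependency relation on the model M and formula Φ, relative to the
environment ρ interpreting each variable by its binding fixed point. -/
def IsDepRel [DecidableEq LVar] (M : KModel Ag PVar) (Φ : Formula Ag PVar LVar)
    (ρ : LVar → Set M.W)
    (D : M.W × Formula Ag PVar LVar → M.W × Formula Ag PVar LVar → Prop) : Prop :=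
  (∀ (u : M.W) (ψ1 ψ2 : Formula Ag PVar LVar), Formula.and ψ1 ψ2 ∈ Φ.subList →
      u ∈ Formula.sem M (Formula.and ψ1 ψ2) ρ →
      D (u, .and ψ1 ψ2) (u, ψ1) ∧ D (u, .and ψ1 ψ2) (u, ψ2)) ∧
  (∀ (u : M.W) (ψ1 ψ2 : Formula Ag PVar LVar), Formula.or ψ1 ψ2 ∈ Φ.subList →
      u ∈ Formula.sem M (Formula.or ψ1 ψ2) ρ →
      (D (u, .or ψ1 ψ2) (u, ψ1) ∧ u ∈ Formula.sem M ψ1 ρ) ∨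
      (D (u, .or ψ1 ψ2) (u, ψ2) ∧ u ∈ Formula.sem M ψ2 ρ)) ∧
  (∀ (u : M.W) (a : Ag) (ψ : Formula Ag PVar LVar), Formula.box a ψ ∈ Φ.subList →
      u ∈ Formula.sem M (Formula.box a ψ) ρ →
      ∀ v : M.W, M.R a u v → D (u, .box a ψ) (v, ψ)) ∧
  (∀ (u : M.W) (a : Ag) (ψ : Formula Ag PVar LVar), Formula.dia a ψ ∈ Φ.subList →
      u ∈ Formula.sem M (Formula.dia a ψ) ρ →
      ∃ v : M.W, M.R a u v ∧ v ∈ Formula.sem M ψ ρ ∧ D (u, .dia a ψ) (v, ψ)) ∧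
  (∀ (u : M.W) (X : LVar) (ψ : Formula Ag PVar LVar), Formula.mu X ψ ∈ Φ.subList →
      u ∈ Formula.sem M (Formula.mu X ψ) ρ → D (u, .mu X ψ) (u, ψ)) ∧
  (∀ (u : M.W) (X : LVar) (ψ : Formula Ag PVar LVar), Formula.nu X ψ ∈ Φ.subList →
      u ∈ Formula.sem M (Formula.nu X ψ) ρ → D (u, .nu X ψ) (u, ψ)) ∧
  (∀ (u : M.W) (X : LVar), Formula.var X ∈ Φ.subList →
      u ∈ Formula.sem M (Formula.var X) ρ → D (u, .var X) (u, fxOf Φ X))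

/-- The restricted relation →_X: drop the edges out of variables Y whose
binding formula fx(Y) is not a subformula of fx(X). -/
def depX [DecidableEq LVar] (M : KModel Ag PVar) (Φ : Formula Ag PVar LVar)
    (D : M.W × Formula Ag PVar LVar → M.W × Formula Ag PVar LVar → Prop)
    (X : LVar) (p1 p2 : M.W × Formula Ag PVar LVar) : Prop :=
  D p1 p2 ∧ ∀ Y : LVar, p1.2 = Formula.var Y → fxOf Φ Y ∈ (fxOf Φ X).subList

/-- X is a least-fixed-point variable of Φ. -/
def IsLfpVar [DecidableEq LVar] (Φ : Formula Ag PVar LVar) (X : LVar) : Prop :=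
  ∃ ψ : Formula Ag PVar LVar, findFx X Φ = some (Formula.mu X ψ)

/-- A dependency relation is lfp-finite when every least-fixed-point variable X
appears only finitely many times on every →_X-sequence. -/
def LfpFinite [DecidableEq LVar] (M : KModel Ag PVar) (Φ : Formula Ag PVar LVar)
    (D : M.W × Formula Ag PVar LVar → M.W × Formula Ag PVar LVar → Prop) : Prop :=
  ∀ X : LVar, IsLfpVar Φ X →
    ∀ f : ℕ → M.W × Formula Ag PVar LVar,
      (∀ n : ℕ, depX M Φ D X (f n) (f (n + 1))) →
      {n : ℕ | (f n).2 = Formula.var X}.Finite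

namespace Formula

theorem self_mem_subList (φ : Formula Ag PVar LVar) : φ ∈ φ.subList := by
  cases φ <;> simp [subList]

theorem subList_trans {χ ψ φ : Formula Ag PVar LVar} (h₁ : χ ∈ ψ.subList)
    (h₂ : ψ ∈ φ.subList) : χ ∈ φ.subList := by
  induction φ <;> simp only [subList, List.mem_cons, List.mem_append, List.not_mem_nil,
    or_false] at h₂ ⊢ <;> grind [subList]

theorem sizeOf_le_of_mem_subList {χ φ : Formula Ag PVar LVar} (h : χ ∈ φ.subList) :
    sizeOf χ ≤ sizeOf φ := by
  induction φ <;> simp only [subList, List.mem_cons, List.mem_append, List.not_mem_nil,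
    or_false] at h <;> grind

theorem mem_freeVars_or_bound {Y : LVar} {φ : Formula Ag PVar LVar}
    (h : var Y ∈ φ.subList) :
    Y ∈ φ.freeVars ∨ ∃ χ, mu Y χ ∈ φ.subList ∨ nu Y χ ∈ φ.subList := by
  induction φ <;> simp [subList] at h <;> simp only [freeVars, subList] <;> grind

section Semantics

variable [DecidableEq LVar] {M : KModel Ag PVar}

theorem sem_mono {ψ : Formula Ag PVar LVar} {ρ₁ ρ₂ : LVar → Set M.W}
    (h : ∀ Y ∈ ψ.freeVars, ρ₁ Y ⊆ ρ₂ Y) : ψ.sem M ρ₁ ⊆ ψ.sem M ρ₂ := by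
  induction ψ generalizing ρ₁ ρ₂ with
  | prop | nprop | tt | ff => exact subset_rfl
  | var X => exact h X rfl
  | and a b iha ihb =>
    exact Set.inter_subset_inter (iha fun Y hY => h Y (.inl hY)) (ihb fun Y hY => h Y (.inr hY))
  | or a b iha ihb =>
    exact Set.union_subset_union (iha fun Y hY => h Y (.inl hY)) (ihb fun Y hY => h Y (.inr hY))
  | dia α a ih => exact fun s ⟨t, hst, ht⟩ => ⟨t, hst, ih h ht⟩
  | box α a ih => exact fun s hs t hst => ih h (hs t hst)
  | mu X a ih =>
    refine Set.sInter_subset_sInter fun S hS => (ih fun Y hY => ?_).trans hS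
    by_cases hYX : Y = X
    · simp [hYX]
    · simpa [hYX] using h Y ⟨hY, hYX⟩
  | nu X a ih =>
    refine Set.sUnion_subset_sUnion fun S hS => Set.Subset.trans hS (ih fun Y hY => ?_)
    by_cases hYX : Y = X
    · simp [hYX]
    · simpa [hYX] using h Y ⟨hY, hYX⟩

theorem sem_congr {ψ : Formula Ag PVar LVar} {ρ₁ ρ₂ : LVar → Set M.W}
    (h : ∀ Y ∈ ψ.freeVars, ρ₁ Y = ρ₂ Y) : ψ.sem M ρ₁ = ψ.sem M ρ₂ :=
  (sem_mono fun Y hY => (h Y hY).subset).antisymm (sem_mono fun Y hY => (h Y hY).superset)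

/-- The operator whose extremal fixed points interpret `mu X ψ` and `nu X ψ`. -/
def bodyHom (M : KModel Ag PVar) (ρ : LVar → Set M.W) (X : LVar) (ψ : Formula Ag PVar LVar) :
    Set M.W →o Set M.W where
  toFun S := ψ.sem M (Function.update ρ X S)
  monotone' S T hST := sem_mono fun Y _ => by
    by_cases hYX : Y = X
    · simpa [hYX] using hST
    · simp [hYX]

theorem bodyHom_apply (ρ : LVar → Set M.W) (X : LVar) (ψ : Formula Ag PVar LVar)
    (S : Set M.W) : bodyHom M ρ X ψ S = ψ.sem M (Function.update ρ X S) := rfl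

theorem sem_mu_eq_lfp (ρ : LVar → Set M.W) (X : LVar) (ψ : Formula Ag PVar LVar) :
    (mu X ψ).sem M ρ = (bodyHom M ρ X ψ).lfp := rfl

theorem sem_nu_eq_gfp (ρ : LVar → Set M.W) (X : LVar) (ψ : Formula Ag PVar LVar) :
    (nu X ψ).sem M ρ = (bodyHom M ρ X ψ).gfp := rfl

theorem sem_mu_unfold {ρ : LVar → Set M.W} {X : LVar} {ψ : Formula Ag PVar LVar}
    (h : ρ X = (mu X ψ).sem M ρ) : ψ.sem M ρ = (mu X ψ).sem M ρ := by
  have := (bodyHom M ρ X ψ).map_lfp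
  rwa [← sem_mu_eq_lfp, ← h, bodyHom_apply, Function.update_eq_self, h] at this

theorem sem_nu_unfold {ρ : LVar → Set M.W} {X : LVar} {ψ : Formula Ag PVar LVar}
    (h : ρ X = (nu X ψ).sem M ρ) : ψ.sem M ρ = (nu X ψ).sem M ρ := by
  have := (bodyHom M ρ X ψ).map_gfp
  rwa [← sem_nu_eq_gfp, ← h, bodyHom_apply, Function.update_eq_self, h] at this

/-- `ρ` interprets every variable bound in `ψ` by its binding fixed point. -/
structure FixesBound (M : KModel Ag PVar) (ψ : Formula Ag PVar LVar)
    (ρ : LVar → Set M.W) : Prop where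
  mu : ∀ {X χ}, mu X χ ∈ ψ.subList → ρ X = (mu X χ).sem M ρ
  nu : ∀ {X χ}, nu X χ ∈ ψ.subList → ρ X = (nu X χ).sem M ρ

theorem FixesBound.of_mem {ψ χ : Formula Ag PVar LVar} {ρ : LVar → Set M.W}
    (h : FixesBound M ψ ρ) (hχ : χ ∈ ψ.subList) : FixesBound M χ ρ :=
  ⟨fun h' => h.mu (subList_trans h' hχ), fun h' => h.nu (subList_trans h' hχ)⟩

theorem FixesBound.sem_mono {ψ χ : Formula Ag PVar LVar} {ρ₁ ρ₂ : LVar → Set M.W}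
    (h₁ : FixesBound M ψ ρ₁) (h₂ : FixesBound M ψ ρ₂)
    (h : ∀ Y ∈ ψ.freeVars, ρ₁ Y ⊆ ρ₂ Y) (hχ : χ ∈ ψ.subList) :
    χ.sem M ρ₁ ⊆ χ.sem M ρ₂ := by
  have top := Formula.sem_mono (M := M) h
  induction ψ with
  | prop | nprop | tt | ff | var =>
    obtain rfl : χ = _ := by simpa [subList] using hχ
    exact top
  | and a b iha ihb | or a b iha ihb =>
    have ha : ∀ Y ∈ a.freeVars, ρ₁ Y ⊆ ρ₂ Y := fun Y hY => h Y (.inl hY)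
    have hb : ∀ Y ∈ b.freeVars, ρ₁ Y ⊆ ρ₂ Y := fun Y hY => h Y (.inr hY)
    have ma := self_mem_subList a
    have mb := self_mem_subList b
    simp only [subList, List.mem_cons, List.mem_append] at hχ
    rcases hχ with rfl | hχ | hχ
    · exact top
    · exact iha (h₁.of_mem (by simp [subList, ma])) (h₂.of_mem (by simp [subList, ma])) ha hχ
        (Formula.sem_mono ha)
    · exact ihb (h₁.of_mem (by simp [subList, mb])) (h₂.of_mem (by simp [subList, mb])) hb hχ
        (Formula.sem_mono hb)
  | dia α a ih | box α a ih =>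
    have ma := self_mem_subList a
    simp only [subList, List.mem_cons] at hχ
    rcases hχ with rfl | hχ
    · exact top
    · exact ih (h₁.of_mem (by simp [subList, ma])) (h₂.of_mem (by simp [subList, ma])) h hχ
        (Formula.sem_mono h)
  | mu X a ih =>
    have ma := self_mem_subList a
    have ha : ∀ Y ∈ a.freeVars, ρ₁ Y ⊆ ρ₂ Y := fun Y hY => by
      by_cases hYX : Y = X
      · rw [hYX, h₁.mu (self_mem_subList _), h₂.mu (self_mem_subList _)]
        exact top
      · exact h Y ⟨hY, hYX⟩
    simp only [subList, List.mem_cons] at hχ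
    rcases hχ with rfl | hχ
    · exact top
    · exact ih (h₁.of_mem (by simp [subList, ma])) (h₂.of_mem (by simp [subList, ma])) ha hχ
        (Formula.sem_mono ha)
  | nu X a ih =>
    have ma := self_mem_subList a
    have ha : ∀ Y ∈ a.freeVars, ρ₁ Y ⊆ ρ₂ Y := fun Y hY => by
      by_cases hYX : Y = X
      · rw [hYX, h₁.nu (self_mem_subList _), h₂.nu (self_mem_subList _)]
        exact top
      · exact h Y ⟨hY, hYX⟩
    simp only [subList, List.mem_cons] at hχ
    rcases hχ with rfl | hχ
    · exact top
    · exact ih (h₁.of_mem (by simp [subList, ma])) (h₂.of_mem (by simp [subList, ma])) ha hχ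
        (Formula.sem_mono ha)

end Semantics

/-- `fx` returns the binder of each variable bound in `ψ`, and no binder occurring in `ψ`
for the free variables of `ψ`. -/
structure Scoped (fx : LVar → Formula Ag PVar LVar) (ψ : Formula Ag PVar LVar) : Prop where
  mu : ∀ {X χ}, mu X χ ∈ ψ.subList → fx X = mu X χ
  nu : ∀ {X χ}, nu X χ ∈ ψ.subList → fx X = nu X χ
  free : ∀ {Y}, Y ∈ ψ.freeVars → fx Y ∉ ψ.subList

namespace Scoped

variable {fx : LVar → Formula Ag PVar LVar} {ψ χ : Formula Ag PVar LVar}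

theorem of_mem (h : Scoped fx ψ) (hχ : χ ∈ ψ.subList)
    (hfree : ∀ Y ∈ χ.freeVars, Y ∈ ψ.freeVars ∨ fx Y ∉ χ.subList) : Scoped fx χ :=
  ⟨fun h' => h.mu (subList_trans h' hχ), fun h' => h.nu (subList_trans h' hχ),
    fun hY hmem => (hfree _ hY).elim (fun h' => h.free h' (subList_trans hmem hχ)) (· hmem)⟩

theorem bound (h : Scoped fx ψ) {Y : LVar} (hY : var Y ∈ ψ.subList) (hf : fx Y ∈ ψ.subList) :
    (∃ χ, fx Y = Formula.mu Y χ) ∨ ∃ χ, fx Y = Formula.nu Y χ := by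
  rcases mem_freeVars_or_bound hY with h' | ⟨χ, h' | h'⟩
  · exact absurd hf (h.free h')
  · exact .inl ⟨χ, h.mu h'⟩
  · exact .inr ⟨χ, h.nu h'⟩

theorem mu_body {X : LVar} (h : Scoped fx (Formula.mu X ψ)) : Scoped fx ψ := by
  refine h.of_mem (by simp [subList, self_mem_subList]) fun Y hY => ?_
  by_cases hYX : Y = X
  · subst hYX
    rw [h.mu (self_mem_subList _)]
    exact .inr fun hm => by simpa using sizeOf_le_of_mem_subList hm
  · exact .inl ⟨hY, hYX⟩

theorem nu_body {X : LVar} (h : Scoped fx (Formula.nu X ψ)) : Scoped fx ψ := by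
  refine h.of_mem (by simp [subList, self_mem_subList]) fun Y hY => ?_
  by_cases hYX : Y = X
  · subst hYX
    rw [h.nu (self_mem_subList _)]
    exact .inr fun hm => by simpa using sizeOf_le_of_mem_subList hm
  · exact .inl ⟨hY, hYX⟩

/-- Any interpretation of the free variables extends to the bound variables. -/
theorem exists_fixesBound [DecidableEq LVar] {M : KModel Ag PVar} (h : Scoped fx ψ)
    (ρ : LVar → Set M.W) :
    ∃ ρ' : LVar → Set M.W, (∀ Y ∈ ψ.freeVars, ρ' Y = ρ Y) ∧ FixesBound M ψ ρ' := by
  classical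
  let Γ : (LVar → Set M.W) →o (LVar → Set M.W) :=
    { toFun := fun ρ' Y => if fx Y ∈ ψ.subList then (fx Y).sem M ρ' else ρ Y
      monotone' := fun ρ₁ ρ₂ h Y => by
        by_cases hY : fx Y ∈ ψ.subList
        · simpa [hY] using Formula.sem_mono fun Z _ => h Z
        · simp [hY] }
  have key : ∀ Y, Γ.lfp Y = if fx Y ∈ ψ.subList then (fx Y).sem M Γ.lfp else ρ Y :=
    fun Y => (congrFun Γ.map_lfp Y).symm
  refine ⟨Γ.lfp, fun Y hY => ?_, fun hm => ?_, fun hm => ?_⟩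
  · rw [key, if_neg (h.free hY)]
  · rw [key, h.mu hm, if_pos hm]
  · rw [key, h.nu hm, if_pos hm]

end Scoped

section Game

variable {M : KModel Ag PVar} {fx : LVar → Formula Ag PVar LVar}
  {σ σ' : M.W × Formula Ag PVar LVar → M.W × Formula Ag PVar LVar}
  {ρ : LVar → Set M.W} {ψ χ : Formula Ag PVar LVar}

/-- The dependencies determined by a strategy `σ` choosing disjuncts and diamond successors. -/
def Edge (fx : LVar → Formula Ag PVar LVar)
    (σ : M.W × Formula Ag PVar LVar → M.W × Formula Ag PVar LVar)
    (p q : M.W × Formula Ag PVar LVar) : Prop :=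
  match p.2 with
  | .and a b => q = (p.1, a) ∨ q = (p.1, b)
  | .or _ _ => q = σ p
  | .dia _ _ => q = σ p
  | .box α a => ∃ v, M.R α p.1 v ∧ q = (v, a)
  | .mu _ a => q = (p.1, a)
  | .nu _ a => q = (p.1, a)
  | .var X => q = (p.1, fx X)
  | _ => False

theorem Edge.congr {p q : M.W × Formula Ag PVar LVar} (h : Edge fx σ p q) (hσ : σ p = σ' p) :
    Edge fx σ' p q := by
  obtain ⟨u, χ⟩ := p
  cases χ <;> simp_all [Edge]

variable [DecidableEq LVar]

/-- The choices of `σ` at the formula `χ` preserve truth under `ρ`. -/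
def ValidAt (ρ : LVar → Set M.W)
    (σ : M.W × Formula Ag PVar LVar → M.W × Formula Ag PVar LVar) :
    Formula Ag PVar LVar → Prop
  | .or a b => ∀ u ∈ (or a b).sem M ρ,
      (σ (u, or a b) = (u, a) ∧ u ∈ a.sem M ρ) ∨ (σ (u, or a b) = (u, b) ∧ u ∈ b.sem M ρ)
  | .dia α a => ∀ u ∈ (dia α a).sem M ρ,
      ∃ v, σ (u, dia α a) = (v, a) ∧ M.R α u v ∧ v ∈ a.sem M ρ
  | _ => True

theorem ValidAt.congr (h : ValidAt ρ σ χ) (hσ : ∀ u, σ (u, χ) = σ' (u, χ)) :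
    ValidAt ρ σ' χ := by
  cases χ <;> simp_all [ValidAt]

theorem exists_validAt (ρ : LVar → Set M.W) :
    ∃ σ : M.W × Formula Ag PVar LVar → M.W × Formula Ag PVar LVar, ∀ χ, ValidAt ρ σ χ := by
  classical
  have : ∀ p : M.W × Formula Ag PVar LVar, ∃ q : M.W × Formula Ag PVar LVar,
      (∀ a b, p.2 = or a b → p.1 ∈ (or a b).sem M ρ →
        (q = (p.1, a) ∧ p.1 ∈ a.sem M ρ) ∨ (q = (p.1, b) ∧ p.1 ∈ b.sem M ρ)) ∧
      (∀ α a, p.2 = dia α a → p.1 ∈ (dia α a).sem M ρ →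
        ∃ v, q = (v, a) ∧ M.R α p.1 v ∧ v ∈ a.sem M ρ) := by
    rintro ⟨u, χ⟩
    by_cases hu : u ∈ χ.sem M ρ
    · cases χ with
      | or a b =>
        rcases hu with hu | hu
        · exact ⟨(u, a), by simp_all⟩
        · exact ⟨(u, b), by simp_all⟩
      | dia α a =>
        obtain ⟨v, hv, hv'⟩ := hu
        exact ⟨(v, a), by simp_all⟩
      | _ => exact ⟨(u, tt), by simp⟩
    · exact ⟨(u, χ), by rintro a b rfl h; exact absurd h hu, by rintro α a rfl h; exact absurd h hu⟩
  choose σ hσ using this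
  refine ⟨σ, fun χ => ?_⟩
  cases χ with
  | or a b => exact fun u hu => (hσ (u, or a b)).1 a b rfl hu
  | dia α a => exact fun u hu => (hσ (u, dia α a)).2 α a rfl hu
  | _ => trivial

theorem Edge.var_or_lt {p q : M.W × Formula Ag PVar LVar} (h : Edge fx σ p q)
    (hv : ValidAt ρ σ p.2) (hp : p.1 ∈ p.2.sem M ρ) :
    (∃ Y, p.2 = var Y ∧ q = (p.1, fx Y)) ∨ (q.2 ∈ p.2.subList ∧ sizeOf q.2 < sizeOf p.2) := by
  obtain ⟨u, χ⟩ := p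
  cases χ with
  | prop | nprop | tt | ff => exact h.elim
  | var Y => exact .inl ⟨Y, rfl, h⟩
  | and a b =>
    rcases h with rfl | rfl <;> right <;> simp [subList, self_mem_subList]
    omega
  | or a b =>
    obtain rfl : q = σ (u, or a b) := h
    rcases hv u hp with ⟨h, -⟩ | ⟨h, -⟩ <;> right <;> simp [h, subList, self_mem_subList]
    omega
  | dia α a =>
    obtain rfl : q = σ (u, dia α a) := h
    obtain ⟨v, h, -⟩ := hv u hp
    right; simp [h, subList, self_mem_subList]
  | box α a =>
    obtain ⟨v, -, rfl⟩ := h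
    right; simp [subList, self_mem_subList]
  | mu X a | nu X a =>
    obtain rfl : q = (u, a) := h
    right; simp [subList, self_mem_subList]

theorem Edge.sound {p q : M.W × Formula Ag PVar LVar} (h : Edge fx σ p q)
    (hs : Scoped fx ψ) (hρ : FixesBound M ψ ρ) (hv : ValidAt ρ σ p.2)
    (hp : p.1 ∈ p.2.sem M ρ) (hpm : p.2 ∈ ψ.subList) (hqm : q.2 ∈ ψ.subList) :
    q.1 ∈ q.2.sem M ρ := by
  obtain ⟨u, χ⟩ := p
  cases χ with
  | prop | nprop | tt | ff => exact h.elim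
  | var Y =>
    obtain rfl : q = (u, fx Y) := h
    rcases hs.bound hpm hqm with ⟨χ, hY⟩ | ⟨χ, hY⟩ <;> simp only [hY] at hqm ⊢
    · rw [← hρ.mu hqm]; exact hp
    · rw [← hρ.nu hqm]; exact hp
  | and a b =>
    rcases h with rfl | rfl
    · exact hp.1
    · exact hp.2
  | or a b =>
    obtain rfl : q = σ (u, or a b) := h
    rcases hv u hp with ⟨h, h'⟩ | ⟨h, h'⟩ <;> rw [h] <;> exact h'
  | dia α a =>
    obtain rfl : q = σ (u, dia α a) := h
    obtain ⟨v, h, -, h'⟩ := hv u hp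
    rw [h]; exact h'
  | box α a =>
    obtain ⟨v, hR, rfl⟩ := h
    exact hp v hR
  | mu X a =>
    obtain rfl : q = (u, a) := h
    exact (sem_mu_unfold (hρ.mu hpm)).superset hp
  | nu X a =>
    obtain rfl : q = (u, a) := h
    exact (sem_nu_unfold (hρ.nu hpm)).superset hp

/-- `f` is an infinite sequence of dependencies between true subformulas of `ψ`. -/
def IsPath (fx : LVar → Formula Ag PVar LVar)
    (σ : M.W × Formula Ag PVar LVar → M.W × Formula Ag PVar LVar) (ρ : LVar → Set M.W)
    (ψ : Formula Ag PVar LVar) (f : ℕ → M.W × Formula Ag PVar LVar) : Prop :=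
  ∀ n, (f n).2 ∈ ψ.subList ∧ (f n).1 ∈ (f n).2.sem M ρ ∧ Edge fx σ (f n) (f (n + 1))

/-- Each least-fixed-point variable `Z` eventually disappears from every path within `ψ`
that unfolds only variables bound inside `fx Z`. -/
def LfpAvoiding (fx : LVar → Formula Ag PVar LVar)
    (σ : M.W × Formula Ag PVar LVar → M.W × Formula Ag PVar LVar) (ρ : LVar → Set M.W)
    (ψ : Formula Ag PVar LVar) : Prop :=
  ∀ Z χ, fx Z = mu Z χ → ∀ f, IsPath fx σ ρ ψ f →
    (∀ n Y, (f n).2 = var Y → fx Y ∈ (fx Z).subList) → ∃ N, ∀ n ≥ N, (f n).2 ≠ var Z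

theorem LfpAvoiding.eventually (h : LfpAvoiding fx σ ρ ψ) {Z : LVar} (hZ : fx Z = mu Z χ)
    {f : ℕ → M.W × Formula Ag PVar LVar} {N : ℕ}
    (hf : ∀ n ≥ N, (f n).2 ∈ ψ.subList ∧ (f n).1 ∈ (f n).2.sem M ρ ∧
      Edge fx σ (f n) (f (n + 1)))
    (hr : ∀ n Y, (f n).2 = var Y → fx Y ∈ (fx Z).subList) :
    ∃ N, ∀ n ≥ N, (f n).2 ≠ var Z := by
  obtain ⟨K, hK⟩ := h Z χ hZ (fun n => f (N + n))
    (fun n => hf (N + n) (Nat.le_add_right ..)) (fun n => hr (N + n))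
  refine ⟨N + K, fun n hn => ?_⟩
  have := hK (n - N) (by omega)
  rwa [Nat.add_sub_cancel' (by omega)] at this

theorem IsPath.var_of_succ_eq {f : ℕ → M.W × Formula Ag PVar LVar} (hf : IsPath fx σ ρ ψ f)
    (hv : ∀ χ ∈ ψ.subList, ValidAt ρ σ χ) {n : ℕ} (h : (f (n + 1)).2 = ψ) :
    ∃ Y, (f n).2 = var Y ∧ fx Y = ψ := by
  obtain ⟨hm, ht, he⟩ := hf n
  rcases he.var_or_lt (hv _ hm) ht with ⟨Y, hY, hq⟩ | ⟨-, hlt⟩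
  · exact ⟨Y, hY, by rw [← h, hq]⟩
  · have := sizeOf_le_of_mem_subList hm
    rw [h] at hlt
    omega

theorem IsPath.succ_ne {f : ℕ → M.W × Formula Ag PVar LVar} (hf : IsPath fx σ ρ ψ f)
    (hs : Scoped fx ψ) (hv : ∀ χ ∈ ψ.subList, ValidAt ρ σ χ)
    (hmu : ∀ X χ, ψ ≠ mu X χ) (hnu : ∀ X χ, ψ ≠ nu X χ) (n : ℕ) : (f (n + 1)).2 ≠ ψ := by
  intro h
  obtain ⟨Y, hY, hfx⟩ := hf.var_of_succ_eq hv h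
  have hm := (hf n).1
  rw [hY] at hm
  rcases hs.bound hm (hfx ▸ self_mem_subList ψ) with ⟨χ, h'⟩ | ⟨χ, h'⟩
  · exact hmu Y χ (hfx ▸ h')
  · exact hnu Y χ (hfx ▸ h')

open Classical in
/-- Follow `σ` on the subformulas of `ψ` and `σ'` elsewhere. -/
noncomputable def patch (ψ : Formula Ag PVar LVar)
    (σ σ' : M.W × Formula Ag PVar LVar → M.W × Formula Ag PVar LVar)
    (p : M.W × Formula Ag PVar LVar) : M.W × Formula Ag PVar LVar :=
  if p.2 ∈ ψ.subList then σ p else σ' p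

theorem patch_of_mem {p : M.W × Formula Ag PVar LVar} (h : p.2 ∈ ψ.subList) :
    patch ψ σ σ' p = σ p := if_pos h

theorem patch_of_notMem {p : M.W × Formula Ag PVar LVar} (h : p.2 ∉ ψ.subList) :
    patch ψ σ σ' p = σ' p := if_neg h

theorem ValidAt.patch (h : ∀ χ ∈ ψ.subList, ValidAt ρ σ χ) (h' : ValidAt ρ σ' χ) :
    ValidAt ρ (patch ψ σ σ') χ := by
  by_cases hχ : χ ∈ ψ.subList
  · exact (h χ hχ).congr fun u => (patch_of_mem hχ).symm
  · exact h'.congr fun u => (patch_of_notMem hχ).symm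

/-- `ψ` admits a truth-preserving strategy avoiding infinite unfolding of least fixed points,
under every environment that interprets its bound variables correctly. -/
def HasStrategy (M : KModel Ag PVar) (fx : LVar → Formula Ag PVar LVar)
    (ψ : Formula Ag PVar LVar) : Prop :=
  Scoped fx ψ → ∀ ρ : LVar → Set M.W, FixesBound M ψ ρ →
    ∃ σ : M.W × Formula Ag PVar LVar → M.W × Formula Ag PVar LVar,
      (∀ χ ∈ ψ.subList, ValidAt ρ σ χ) ∧ LfpAvoiding fx σ ρ ψ

theorem hasStrategy_atom (h : ψ.subList = [ψ]) (hmu : ∀ X χ, ψ ≠ mu X χ)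
    (hnu : ∀ X χ, ψ ≠ nu X χ) : HasStrategy M fx ψ := by
  intro hs ρ _
  obtain ⟨σ, hσ⟩ := exists_validAt (M := M) ρ
  refine ⟨σ, fun χ _ => hσ χ, fun Z χ _ f hf _ => ?_⟩
  exact absurd (by simpa [h] using (hf 1).1) (hf.succ_ne hs (fun χ _ => hσ χ) hmu hnu 0)

theorem hasStrategy_unary {a : Formula Ag PVar LVar} (h : ψ.subList = ψ :: a.subList)
    (hfv : ψ.freeVars = a.freeVars) (hmu : ∀ X χ, ψ ≠ mu X χ) (hnu : ∀ X χ, ψ ≠ nu X χ)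
    (ih : HasStrategy M fx a) : HasStrategy M fx ψ := by
  intro hs ρ hρ
  have hm : a ∈ ψ.subList := by simp [h, self_mem_subList]
  obtain ⟨σ, hσ, hσ'⟩ := ih (hs.of_mem hm fun Y hY => .inl (hfv ▸ hY)) ρ (hρ.of_mem hm)
  obtain ⟨τ, hτ⟩ := exists_validAt (M := M) (Ag := Ag) (LVar := LVar) ρ
  have hv : ∀ χ, ValidAt ρ (patch a σ τ) χ := fun χ => .patch hσ (hτ χ)
  refine ⟨patch a σ τ, fun χ _ => hv χ, fun Z χ hZ f hf hr => ?_⟩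
  refine hσ'.eventually (N := 1) hZ (fun n hn => ?_) hr
  obtain ⟨n, rfl⟩ := Nat.exists_eq_add_of_le' hn
  have hma : (f (n + 1)).2 ∈ a.subList := by
    have := (hf (n + 1)).1
    rw [h, List.mem_cons] at this
    exact this.resolve_left (hf.succ_ne hs (fun χ _ => hv χ) hmu hnu n)
  exact ⟨hma, (hf _).2.1, (hf _).2.2.congr (patch_of_mem hma)⟩

theorem hasStrategy_binary {a b : Formula Ag PVar LVar}
    (h : ψ.subList = ψ :: (a.subList ++ b.subList))
    (hfv : ψ.freeVars = a.freeVars ∪ b.freeVars)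
    (hmu : ∀ X χ, ψ ≠ mu X χ) (hnu : ∀ X χ, ψ ≠ nu X χ)
    (iha : HasStrategy M fx a) (ihb : HasStrategy M fx b) : HasStrategy M fx ψ := by
  intro hs ρ hρ
  have hma : a ∈ ψ.subList := by simp [h, self_mem_subList]
  have hmb : b ∈ ψ.subList := by simp [h, self_mem_subList]
  have hsa : Scoped fx a := hs.of_mem hma fun Y hY => .inl (hfv ▸ .inl hY)
  obtain ⟨σ, hσ, hσ'⟩ := iha hsa ρ (hρ.of_mem hma)
  obtain ⟨τ, hτ, hτ'⟩ := ihb (hs.of_mem hmb fun Y hY => .inl (hfv ▸ .inr hY)) ρ (hρ.of_mem hmb)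
  obtain ⟨υ, hυ⟩ := exists_validAt (M := M) (Ag := Ag) (LVar := LVar) ρ
  have hv : ∀ χ, ValidAt ρ (patch a σ (patch b τ υ)) χ := fun χ => .patch hσ (.patch hτ (hυ χ))
  refine ⟨patch a σ (patch b τ υ), fun χ _ => hv χ, fun Z χ hZ f hf hr => ?_⟩
  by_cases hN : ∃ N, (f N).2 ∈ a.subList
  · obtain ⟨N, hN⟩ := hN
    have hstay : ∀ n ≥ N, (f n).2 ∈ a.subList := by
      intro n hn
      induction n, hn using Nat.le_induction with
      | base => exact hN
      | succ n _ ih =>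
        rcases (hf n).2.2.var_or_lt (hv _) (hf n).2.1 with ⟨Y, hY, hq⟩ | ⟨hsub, -⟩
        · have hq' : fx Y ∈ ψ.subList := by simpa [hq] using (hf (n + 1)).1
          rw [hY] at ih
          rcases mem_freeVars_or_bound ih with hY' | ⟨χ, hY' | hY'⟩
          · exact absurd hq' (hs.free (hfv ▸ .inl hY'))
          · simpa [hq, hsa.mu hY'] using hY'
          · simpa [hq, hsa.nu hY'] using hY'
        · exact subList_trans hsub ih
    exact hσ'.eventually hZ (fun n hn => ⟨hstay n hn, (hf n).2.1,
      (hf n).2.2.congr (patch_of_mem (hstay n hn))⟩) hr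
  · push Not at hN
    refine hτ'.eventually (N := 1) hZ (fun n hn => ?_) hr
    obtain ⟨n, rfl⟩ := Nat.exists_eq_add_of_le' hn
    have hmem : (f (n + 1)).2 ∈ b.subList := by
      have := (hf (n + 1)).1
      rw [h, List.mem_cons, List.mem_append] at this
      exact (this.resolve_left (hf.succ_ne hs (fun χ _ => hv χ) hmu hnu n)).resolve_left (hN _)
    exact ⟨hmem, (hf _).2.1,
      (hf _).2.2.congr ((patch_of_notMem (hN _)).trans (patch_of_mem hmem))⟩

theorem hasStrategy_nu {X : LVar} (ih : HasStrategy M fx ψ) : HasStrategy M fx (nu X ψ) := by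
  intro hs ρ hρ
  have hm : ψ ∈ (nu X ψ).subList := by simp [subList, self_mem_subList]
  obtain ⟨σ, hσ, hσ'⟩ := ih hs.nu_body ρ (hρ.of_mem hm)
  obtain ⟨τ, hτ⟩ := exists_validAt (M := M) (Ag := Ag) (LVar := LVar) ρ
  have hv : ∀ χ, ValidAt ρ (patch ψ σ τ) χ := fun χ => .patch hσ (hτ χ)
  refine ⟨patch ψ σ τ, fun χ _ => hv χ, fun Z χ hZ f hf hr => ?_⟩
  by_cases hZm : fx Z ∈ (nu X ψ).subList
  · have hZψ : fx Z ∈ ψ.subList := by simpa [subList, hZ] using hZm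
    refine hσ'.eventually (N := 1) hZ (fun n hn => ?_) hr
    obtain ⟨n, rfl⟩ := Nat.exists_eq_add_of_le' hn
    have hma : (f (n + 1)).2 ∈ ψ.subList := by
      have := (hf (n + 1)).1
      simp only [subList, List.mem_cons] at this
      refine this.resolve_left fun h => ?_
      obtain ⟨Y, hY, hfx⟩ := hf.var_of_succ_eq (fun χ _ => hv χ) h
      have := sizeOf_le_of_mem_subList (subList_trans (hr n Y hY) hZψ)
      rw [hfx] at this
      simp at this
    exact ⟨hma, (hf _).2.1, (hf _).2.2.congr (patch_of_mem hma)⟩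
  · refine ⟨0, fun n _ hn => hZm ?_⟩
    have he := (hf n).2.2
    simp only [Edge, hn] at he
    simpa [he] using (hf (n + 1)).1

theorem mem_lfpApprox_bodyHom {X : LVar} {u : M.W} {a : Ordinal.{0}}
    (hu : u ∈ OrdinalApprox.lfpApprox (bodyHom M ρ X ψ) ⊥ a) :
    ∃ b < a, u ∈ ψ.sem M
      (Function.update ρ X (OrdinalApprox.lfpApprox (bodyHom M ρ X ψ) ⊥ b)) := by
  rw [OrdinalApprox.lfpApprox] at hu
  simpa [bodyHom_apply] using hu

theorem exists_forall_ge_eq_of_antitone {α : Type*} [LinearOrder α] [WellFoundedLT α]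
    {m : ℕ → α} (hm : Antitone m) : ∃ N, ∀ n ≥ N, m n = m N := by
  obtain ⟨-, ⟨N, rfl⟩, hN⟩ := wellFounded_lt.has_min (Set.range m) (Set.range_nonempty m)
  exact ⟨N, fun n hn => (hm hn).antisymm (not_lt.1 (hN _ ⟨n, rfl⟩))⟩

theorem hasStrategy_mu {X : LVar} (ih : HasStrategy M fx ψ) : HasStrategy M fx (mu X ψ) := by
  classical
  intro hs ρ hρ
  have hself := self_mem_subList (mu X ψ)
  have hfxX : fx X = mu X ψ := hs.mu hself
  have hm : ψ ∈ (mu X ψ).subList := by simp [subList, self_mem_subList]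
  have hsψ := hs.mu_body
  have hρψ := hρ.of_mem hm
  set S := OrdinalApprox.lfpApprox (bodyHom M ρ X ψ) ⊥
  have hSle : ∀ o, S o ⊆ ρ X := fun o => by
    rw [hρ.mu hself, sem_mu_eq_lfp]
    exact OrdinalApprox.lfpApprox_le_of_mem_fixedPoints _
      (bodyHom M ρ X ψ).isFixedPt_lfp bot_le o
  obtain ⟨top, htop⟩ : ∃ o, S o = ρ X := by
    rw [hρ.mu hself, sem_mu_eq_lfp]
    exact OrdinalApprox.lfp_mem_range_lfpApprox _
  choose r hrfree hrfix using fun o : Ordinal.{0} =>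
    hsψ.exists_fixesBound (Function.update ρ X (S o))
  choose s hsv hsavoid using fun o => ih hsψ (r o) (hrfix o)
  have hle : ∀ o, ∀ χ ∈ ψ.subList, χ.sem M (r o) ⊆ χ.sem M ρ := fun o χ hχ => by
    refine (hrfix o).sem_mono hρψ (fun Y hY => ?_) hχ
    rw [hrfree o Y hY]
    by_cases hYX : Y = X
    · simpa [hYX] using hSle o
    · simp [hYX]
  have hge : ∀ χ ∈ ψ.subList, χ.sem M ρ ⊆ χ.sem M (r top) := fun χ hχ => by
    refine hρψ.sem_mono (hrfix top) (fun Y hY => ?_) hχ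
    rw [hrfree top Y hY, htop, Function.update_eq_self]
  let rank : M.W × Formula Ag PVar LVar → Ordinal.{0} :=
    fun p => sInf {o | p.1 ∈ p.2.sem M (r o)}
  have rank_mem : ∀ p : M.W × Formula Ag PVar LVar, p.2 ∈ ψ.subList → p.1 ∈ p.2.sem M ρ →
      p.1 ∈ p.2.sem M (r (rank p)) :=
    fun p hp ht => csInf_mem (s := {o | p.1 ∈ p.2.sem M (r o)}) ⟨top, hge _ hp ht⟩
  have rank_le : ∀ (p : M.W × Formula Ag PVar LVar) o, p.1 ∈ p.2.sem M (r o) → rank p ≤ o :=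
    fun p o h => csInf_le' h
  obtain ⟨τ, hτ⟩ := exists_validAt (M := M) (Ag := Ag) (LVar := LVar) ρ
  let σ := patch ψ (fun p => s (rank p) p) τ
  have hσ : ∀ p : M.W × Formula Ag PVar LVar, p.2 ∈ ψ.subList → σ p = s (rank p) p :=
    fun p hp => patch_of_mem hp
  have hv : ∀ χ, ValidAt ρ σ χ := fun χ => by
    refine .patch (fun χ hχ => ?_) (hτ χ)
    cases χ with
    | or a b =>
      intro u hu
      have ha := hle (rank (u, or a b)) a
        (subList_trans (by simp [subList, self_mem_subList]) hχ)
      have hb := hle (rank (u, or a b)) b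
        (subList_trans (by simp [subList, self_mem_subList]) hχ)
      exact (hsv (rank (u, or a b)) _ hχ u (rank_mem (u, or a b) hχ hu)).imp
        (fun h => ⟨h.1, ha h.2⟩) (fun h => ⟨h.1, hb h.2⟩)
    | dia α a =>
      intro u hu
      have ha := hle (rank (u, dia α a)) a
        (subList_trans (by simp [subList, self_mem_subList]) hχ)
      obtain ⟨v, h, hR, hv⟩ := hsv (rank (u, dia α a)) _ hχ u (rank_mem (u, dia α a) hχ hu)
      exact ⟨v, h, hR, ha hv⟩
    | _ => trivial
  refine ⟨σ, fun χ _ => hv χ, fun Z χ hZ f hf hr => ?_⟩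
  have hcase : ∀ n, (f n).2 = mu X ψ ∨ (f n).2 ∈ ψ.subList := fun n => by
    simpa [subList] using (hf n).1
  have hreturn : ∀ n, (f (n + 1)).2 = mu X ψ → (f n).2 = var X := fun n h => by
    obtain ⟨Y, hY, hfx⟩ := hf.var_of_succ_eq (fun χ _ => hv χ) h
    rcases hs.bound (hY ▸ (hf n).1) (hfx ▸ hself) with ⟨χ, h'⟩ | ⟨χ, h'⟩ <;>
      rw [hfx] at h' <;> cases h'
    exact hY
  let m : M.W × Formula Ag PVar LVar → Ordinal.{0} :=
    fun p => if p.2 = mu X ψ then rank (p.1, ψ) else rank p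
  have hne : ∀ p : M.W × Formula Ag PVar LVar, p.2 ∈ ψ.subList → p.2 ≠ mu X ψ :=
    fun p hp h => by
      rw [h] at hp
      simpa using sizeOf_le_of_mem_subList hp
  have hmψ : ∀ p : M.W × Formula Ag PVar LVar, p.2 ∈ ψ.subList → m p = rank p :=
    fun p hp => if_neg (hne p hp)
  have hlt : ∀ n, (f n).2 = var X → m (f (n + 1)) < m (f n) := fun n hn => by
    obtain ⟨u, hu⟩ : ∃ u, f n = (u, var X) := ⟨(f n).1, by rw [← hn]⟩
    have hq : f (n + 1) = (u, mu X ψ) := by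
      have := (hf n).2.2
      rw [hu] at this
      simpa only [Edge, hfxX] using this
    have hmem : var X ∈ ψ.subList := by simpa [hn] using hcase n
    have hXfree : X ∈ ψ.freeVars := by
      rcases mem_freeVars_or_bound hmem with h | ⟨χ, h | h⟩
      · exact h
      · exact absurd (hsψ.mu h ▸ h) (hfxX ▸ fun h => hne (u, mu X ψ) h rfl)
      · exact absurd (hsψ.nu h ▸ h) (hfxX ▸ fun h => hne (u, mu X ψ) h rfl)
    have hrank := rank_mem (u, var X) hmem (by simpa [hu] using (hf n).2.1)
    change u ∈ r _ X at hrank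
    rw [hrfree _ X hXfree, Function.update_self] at hrank
    obtain ⟨b, hb, hub⟩ := mem_lfpApprox_bodyHom hrank
    rw [hq, hu, hmψ (u, var X) hmem]
    refine lt_of_le_of_lt ?_ hb
    simp only [m, if_true]
    refine rank_le _ _ ?_
    rwa [sem_congr (hrfree b)]
  have hstep : ∀ n, m (f (n + 1)) ≤ m (f n) := fun n => by
    rcases hcase n with h | h
    · have he := (hf n).2.2
      simp only [Edge, h] at he
      simp [m, h, he]
    by_cases hX : (f n).2 = var X
    · exact (hlt n hX).le
    have hq := (hcase (n + 1)).resolve_left (fun h => hX (hreturn n h))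
    rw [hmψ _ h, hmψ _ hq]
    exact rank_le _ _ (((hf n).2.2.congr (hσ _ h)).sound hsψ (hrfix _) (hsv _ _ h)
      (rank_mem _ h (hf n).2.1) h hq)
  obtain ⟨N, hN⟩ := exists_forall_ge_eq_of_antitone (m := fun n => m (f n))
    (antitone_nat_of_succ_le hstep)
  have hnX : ∀ n ≥ N, (f n).2 ≠ var X := fun n hn h => by
    have := hlt n h
    simp only [hN n hn, hN (n + 1) (by omega), lt_irrefl] at this
  refine (hsavoid (m (f N))).eventually (N := N + 1) hZ (fun n hn => ?_) hr
  have hmem : (f n).2 ∈ ψ.subList := by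
    obtain ⟨k, rfl⟩ := Nat.exists_eq_add_of_le' (show 1 ≤ n by omega)
    exact (hcase (k + 1)).resolve_left fun h => hnX k (by omega) (hreturn k h)
  have hrk : m (f N) = rank (f n) := by rw [← hmψ _ hmem]; exact (hN n (by omega)).symm
  rw [hrk]
  exact ⟨hmem, rank_mem _ hmem (hf n).2.1, (hf n).2.2.congr (hσ _ hmem)⟩

theorem hasStrategy (M : KModel Ag PVar) (fx : LVar → Formula Ag PVar LVar)
    (ψ : Formula Ag PVar LVar) : HasStrategy M fx ψ := by
  induction ψ with
  | prop | nprop | tt | ff | var => exact hasStrategy_atom rfl (by simp) (by simp)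
  | and a b iha ihb => exact hasStrategy_binary rfl rfl (by simp) (by simp) iha ihb
  | or a b iha ihb => exact hasStrategy_binary rfl rfl (by simp) (by simp) iha ihb
  | dia α a ih => exact hasStrategy_unary rfl rfl (by simp) (by simp) ih
  | box α a ih => exact hasStrategy_unary rfl rfl (by simp) (by simp) ih
  | mu X a ih => exact hasStrategy_mu ih
  | nu X a ih => exact hasStrategy_nu ih

end Game

section Binders

variable [DecidableEq LVar] {X : LVar} {φ χ : Formula Ag PVar LVar}

theorem binderCountV_pos (h : mu X χ ∈ φ.subList ∨ nu X χ ∈ φ.subList) :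
    0 < binderCountV X φ := by
  induction φ <;> simp [subList] at h <;> simp only [binderCountV] <;> grind

theorem findFx_eq_none (h : binderCountV X φ = 0) : findFx X φ = none := by
  induction φ <;> simp only [binderCountV] at h <;> simp only [findFx] <;> grind

theorem findFx_eq_some {β : Formula Ag PVar LVar} (hβ : β = mu X χ ∨ β = nu X χ)
    (h : β ∈ φ.subList) (hc : binderCountV X φ ≤ 1) : findFx X φ = some β := by
  have pos : ∀ ψ : Formula Ag PVar LVar, β ∈ ψ.subList → 0 < binderCountV X ψ := fun ψ hψ =>
    binderCountV_pos (hβ.imp (fun h => h ▸ hψ) (fun h => h ▸ hψ))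
  induction φ with
  | prop | nprop | tt | ff | var => rcases hβ with rfl | rfl <;> simp [subList] at h
  | and a b iha ihb | or a b iha ihb =>
    have h' : β ∈ a.subList ∨ β ∈ b.subList := by
      rcases hβ with rfl | rfl <;> simpa [subList] using h
    simp only [binderCountV] at hc
    simp only [findFx]
    rcases h' with h' | h'
    · simp [iha h' (by omega)]
    · have := pos _ h'
      simp [findFx_eq_none (show binderCountV X a = 0 by omega), ihb h' (by omega)]
  | dia α a ih | box α a ih =>
    have h' : β ∈ a.subList := by rcases hβ with rfl | rfl <;> simpa [subList] using h
    exact ih h' hc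
  | mu Y a ih | nu Y a ih =>
    simp only [subList, List.mem_cons] at h
    simp only [binderCountV] at hc
    rcases h with rfl | h'
    · rcases hβ with hβ | hβ <;> cases hβ
      simp [findFx]
    · have := pos _ h'
      have hYX : Y ≠ X := fun h => by simp [h] at hc; omega
      simp only [findFx, if_neg hYX]
      exact ih h' (by omega)

theorem scoped_fxOf (hc : φ.Closed) (hwn : WellNamed φ) : Scoped (fxOf φ) φ where
  mu {X _} h := by simp [fxOf, findFx_eq_some (.inl rfl) h (hwn X)]
  nu {X _} h := by simp [fxOf, findFx_eq_some (.inr rfl) h (hwn X)]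
  free h := by simp [show φ.freeVars = ∅ from hc] at h

end Binders

end Formula

/-- if (M,w) ⊨ φ for an L-model M and a closed, well-named φ,
then there exists an lfp-finite dependency relation on M and φ. -/
theorem exists_lfp_finite_dependency_relation [DecidableEq LVar]
    (L : Ag → Set FrameCond) (M : KModel Ag PVar) (hM : IsLModel L M)
    (w : M.W) (φ : Formula Ag PVar LVar) (hc : φ.Closed) (hwn : WellNamed φ)
    (ρ : LVar → Set M.W)
    (hρ : ∀ (X : LVar) (ψ : Formula Ag PVar LVar),
      findFx X φ = some ψ → ρ X = Formula.sem M ψ ρ)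
    (hw : w ∈ Formula.sem M φ ρ) :
    ∃ D : M.W × Formula Ag PVar LVar → M.W × Formula Ag PVar LVar → Prop,
      IsDepRel M φ ρ D ∧ LfpFinite M φ D := by
  obtain ⟨σ, hσ, hσ'⟩ := φ.hasStrategy M (fxOf φ) (Formula.scoped_fxOf hc hwn) ρ
    ⟨fun {X _} h => hρ X _ (Formula.findFx_eq_some (.inl rfl) h (hwn X)),
      fun {X _} h => hρ X _ (Formula.findFx_eq_some (.inr rfl) h (hwn X))⟩
  refine ⟨fun p q => p.2 ∈ φ.subList ∧ p.1 ∈ p.2.sem M ρ ∧ Formula.Edge (fxOf φ) σ p q,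
    ⟨fun u a b hm hu => ⟨⟨hm, hu, .inl rfl⟩, hm, hu, .inr rfl⟩, fun u a b hm hu => ?_,
      fun u α a hm hu v hv => ⟨hm, hu, v, hv, rfl⟩, fun u α a hm hu => ?_,
      fun u X a hm hu => ⟨hm, hu, rfl⟩, fun u X a hm hu => ⟨hm, hu, rfl⟩,
      fun u X hm hu => ⟨hm, hu, rfl⟩⟩, fun X ⟨χ, hX⟩ f hf => ?_⟩
  · exact (hσ _ hm u hu).imp (fun h => ⟨⟨hm, hu, h.1.symm⟩, h.2⟩)
      (fun h => ⟨⟨hm, hu, h.1.symm⟩, h.2⟩)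
  · obtain ⟨v, h, hR, hv⟩ := hσ _ hm u hu
    exact ⟨v, hR, hv, hm, hu, h.symm⟩
  · obtain ⟨N, hN⟩ := hσ' X χ (by simp [fxOf, hX]) f (fun n => (hf n).1) (fun n => (hf n).2)
    exact (Set.finite_lt_nat N).subset fun n hn => not_le.1 fun h => hN n h hn
end
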